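/- arXiv:2303.08596 — 2 statements merged into one kernel-verified Lean document; each statement's English description precedes it below -/
import Mathlib

section
/- Ginibre inequality for divergence-free spin models (Lemma 5.2): In the edge-dependent setup below, for every positive definite function F: ℝ/2πℤ → ℝ and all edges e, f ∈ E, the function β_e ↦ μ_{β,⋄}[F(J_f)] is nondecreasing on [0,∞) (all other parameters β_g, g ≠ e, being held fixed). -/
/-!
The proof is Ginibre's duplication of variables, carried out with positive semidefinite kernels
instead of Fourier series.

Let `J`, `J'` be independent samples of the Haar measure of `ker(d*)`. Writing
`w = exp(-∑ β_g U_g(J_g))` and `h = exp(-(β'_e - β_e) U_e(J_e))`, the claim is equivalent to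
`∬ w(J) w(J') (F(J_f) - F(J'_f)) (h(J) - h(J')) ≥ 0`. The group `ker(d*)` is divisible by two
(`exists_half`), so `(A, B) ↦ (A + B, A - B)` preserves the product Haar measure
(`IsHaarOn.measurePreserving`) and one may substitute `J = A + B`, `J' = A - B`. If `φ(a - b)` is
a positive semidefinite kernel, then so are `φ(a - b) + φ(a + b)` and `φ(a - b) - φ(a + b)`
(`psdk_double`). Since such kernels are stable under sums, products and exponentials, the whole
integrand is a positive semidefinite kernel in `(A, B)`. A bounded kernel of this kind has
nonnegative integral against `μ × μ`, as one sees by averaging over a large i.i.d. sample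
(`PSDK.integral_nonneg`).

Divisibility by two amounts to solving `d*κ = s` over `ZMod 2`; by linear duality the only
obstruction is a function `z` on vertices that is constant along edges with `∑ z_x s_x ≠ 0`,
and summation by parts excludes it.

Since positive definiteness is tested with real coefficients only, `F` need be neither even
nor measurable. The Haar measure is invariant under `J ↦ -J`, so `F` may be replaced by its even
part, which is bounded by `F 0`. If `J ↦ F(J_f)` is not integrable, then neither are its products
with the densities, and both expectations equal `0` by convention.
-/

open MeasureTheory Real
noncomputable section

instance : Fact (0 < 2 * π) := ⟨by positivity⟩

/-- `Real.Angle = ℝ/2πℤ` with its Borel σ-algebra. -/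
instance : MeasurableSpace Real.Angle := by unfold Real.Angle; infer_instance

/-- Divergence of a `G`-valued 1-form: `(d*ω)_x = Σ_{e : tgt e = x} ω_e - Σ_{e : src e = x} ω_e`. -/
def divg {V E G : Type*} [Fintype E] [DecidableEq V] [AddCommGroup G]
    (src tgt : E → V) (ω : E → G) : V → G :=
  fun x => (∑ e, if tgt e = x then ω e else 0) - ∑ e, if src e = x then ω e else 0

/-- A (2π-periodic, i.e. circle) function is positive definite if all matrices
`(F(t_i - t_j))_{ij}` are positive semidefinite. -/
def PosDefFn (F : ℝ → ℝ) : Prop :=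
  ∀ (n : ℕ) (t ξ : Fin n → ℝ), 0 ≤ ∑ i, ∑ j, ξ i * ξ j * F (t i - t j)

/-- `lam` is the Haar probability measure of the compact group `ker(d*) ⊆ (ℝ/2πℤ)^E`:
a probability measure carried by `ker(d*)` and invariant under translation by every element
of `ker(d*)` (these properties characterise it uniquely). -/
def IsKerHaar {V E : Type*} [Fintype E] [DecidableEq V] (src tgt : E → V)
    (lam : Measure (E → Real.Angle)) : Prop :=
  IsProbabilityMeasure lam ∧
  lam {J | divg src tgt J = 0} = 1 ∧
  ∀ J₀ : E → Real.Angle, divg src tgt J₀ = 0 →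
    Measure.map (fun J => J₀ + J) lam = lam

/-- Expectation with respect to the ⋄-spin measure `μ_{β,⋄}`: density
`∝ Π_g e^{-β_g 𝒰_g(J_g)}` with respect to the Haar probability measure of `ker(d*)`;
the `2π`-periodic potentials are evaluated at the representative `(J g).toReal ∈ (-π,π]`. -/
def diamSpinExpB {E : Type*} [Fintype E] (U : E → ℝ → ℝ) (β : E → ℝ)
    (lam : Measure (E → Real.Angle)) (F : (E → Real.Angle) → ℝ) : ℝ :=
  (∫ J, F J * ∏ g, Real.exp (-(β g) * U g ((J g).toReal)) ∂ lam) /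
    ∫ J, ∏ g, Real.exp (-(β g) * U g ((J g).toReal)) ∂ lam

/-! ### Positive semidefinite kernels -/

/-- Positive semidefinite real kernels on `X`: symmetric, with nonnegative quadratic forms on
finite families of points. Symmetry is required separately because only real coefficients are
used. The families are indexed by arbitrary finite types rather than `Fin n`. -/
def PSDK {X : Type*} (K : X → X → ℝ) : Prop :=
  (∀ a b, K a b = K b a) ∧ ∀ (ι : Type) [Fintype ι] (t : ι → X) (ξ : ι → ℝ),
    0 ≤ ∑ i, ∑ j, ξ i * ξ j * K (t i) (t j)

namespace PSDK
variable {X Y : Type*} {K L : X → X → ℝ}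

theorem comp (hK : PSDK K) (g : Y → X) : PSDK fun a b => K (g a) (g b) :=
  ⟨fun _ _ => hK.1 _ _, fun ι _ t ξ => hK.2 ι (g ∘ t) ξ⟩

theorem const {c : ℝ} (hc : 0 ≤ c) : PSDK fun _ _ : X => c := by
  refine ⟨fun _ _ => rfl, fun ι _ t ξ => ?_⟩
  have : ∑ i, ∑ j, ξ i * ξ j * c = (∑ i, ξ i) ^ 2 * c := by
    rw [sq, Finset.sum_mul_sum, Finset.sum_mul]
    simp_rw [Finset.sum_mul]
  rw [this]; positivity

theorem add (hK : PSDK K) (hL : PSDK L) : PSDK fun a b => K a b + L a b := by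
  refine ⟨fun a b => by simp only [hK.1 a b, hL.1 a b], fun ι _ t ξ => ?_⟩
  simp only [mul_add, Finset.sum_add_distrib]
  exact add_nonneg (hK.2 ι t ξ) (hL.2 ι t ξ)

theorem smul {c : ℝ} (hc : 0 ≤ c) (hK : PSDK K) : PSDK fun a b => c * K a b := by
  refine ⟨fun a b => by simp only [hK.1 a b], fun ι _ t ξ => ?_⟩
  have := mul_nonneg hc (hK.2 ι t ξ)
  simp only [Finset.mul_sum] at this
  refine this.trans_eq (Finset.sum_congr rfl fun i _ => Finset.sum_congr rfl fun j _ => by ring)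

theorem sum {κ : Type*} (s : Finset κ) {K : κ → X → X → ℝ} (hK : ∀ k ∈ s, PSDK (K k)) :
    PSDK fun a b => ∑ k ∈ s, K k a b := by
  classical
  induction s using Finset.induction_on with
  | empty => simpa using const (X := X) le_rfl
  | insert k s hk ih =>
    simp only [Finset.sum_insert hk]
    exact (hK k (by simp)).add (ih fun j hj => hK j (by simp [hj]))

/-- The Schur product theorem, applied to the matrices of both kernels on a finite family. -/
theorem mul (hK : PSDK K) (hL : PSDK L) : PSDK fun a b => K a b * L a b := by
  refine ⟨fun a b => by simp only [hK.1 a b, hL.1 a b], fun ι _ t ξ => ?_⟩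
  have key : ∀ {K : X → X → ℝ}, (∀ a b, K a b = K b a) → ((Matrix.of fun i j => K (t i) (t j)).PosSemidef ↔
      ∀ ξ : ι → ℝ, 0 ≤ ∑ i, ∑ j, ξ i * ξ j * K (t i) (t j)) := by
    intro K hK
    rw [Matrix.posSemidef_iff_dotProduct_mulVec]
    have h1 : (Matrix.of fun i j => K (t i) (t j)).IsHermitian := by
      ext i j; simp [hK (t i) (t j)]
    simp only [h1, true_and]
    refine forall_congr' fun ξ => ?_
    simp only [dotProduct, Matrix.mulVec, Matrix.of_apply, Finset.mul_sum, Pi.star_apply, star_trivial]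
    refine Eq.to_iff (congrArg _ (Finset.sum_congr rfl fun i _ => Finset.sum_congr rfl fun j _ => by ring))
  have h := ((key hK.1).2 (hK.2 ι t)).hadamard ((key hL.1).2 (hL.2 ι t))
  exact (key (K := fun a b => K a b * L a b) (fun a b => by rw [hK.1, hL.1])).1 h ξ

theorem pow (hK : PSDK K) (n : ℕ) : PSDK fun a b => K a b ^ n := by
  induction n with
  | zero => simpa using const (X := X) zero_le_one
  | succ n ih => simpa only [pow_succ] using ih.mul hK

/-- The exponential series has nonnegative coefficients. -/
theorem exp (hK : PSDK K) : PSDK fun a b => Real.exp (K a b) := by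
  refine ⟨fun a b => by simp only [hK.1 a b], fun ι _ t ξ => ?_⟩
  have h : HasSum (fun n : ℕ => ∑ i, ∑ j, ξ i * ξ j * (K (t i) (t j) ^ n / n.factorial))
      (∑ i, ∑ j, ξ i * ξ j * Real.exp (K (t i) (t j))) := by
    refine hasSum_sum fun i _ => hasSum_sum fun j _ => HasSum.mul_left _ ?_
    rw [Real.exp_eq_exp_ℝ]
    exact NormedSpace.expSeries_div_hasSum_exp _
  refine h.nonneg fun n => ?_
  have := ((hK.pow n).smul (c := (n.factorial : ℝ)⁻¹) (by positivity)).2 ι t ξ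
  simpa only [div_eq_inv_mul] using this

end PSDK

/-- For `s = ±1`, twice the quadratic form of the new kernel at points `t i` with coefficients `ξ i`
is the form of `φ(a - b)` at the points `t i` and `-t i` with coefficients `ξ i` and `s ξ i`. -/
theorem psdk_double {G : Type*} [AddCommGroup G] {φ : G → ℝ}
    (hφ : PSDK fun a b => φ (a - b)) {s : ℝ} (hs : s * s = 1) :
    PSDK fun a b => φ (a - b) + s * φ (a + b) := by
  have hev : ∀ a, φ (-a) = φ a := fun a => by simpa using hφ.1 0 a
  refine ⟨fun a b => by simp only [add_comm a b, hφ.1 a b], fun ι _ t ξ => ?_⟩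
  have h := hφ.2 (ι ⊕ ι) (Sum.elim t (-t)) (Sum.elim ξ (s • ξ))
  simp only [Fintype.sum_sum_type, Sum.elim_inl, Sum.elim_inr, Pi.neg_apply, Pi.smul_apply,
    smul_eq_mul, ← Finset.sum_add_distrib] at h
  have e : ∀ i j, ξ i * ξ j * φ (t i - t j) + ξ i * (s * ξ j) * φ (t i - -t j) +
      (s * ξ i * ξ j * φ (-t i - t j) + s * ξ i * (s * ξ j) * φ (-t i - -t j)) =
      2 * (ξ i * ξ j * (φ (t i - t j) + s * φ (t i + t j))) := by
    intro i j
    rw [← hev (-t i - t j), ← hev (-t i - -t j)]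
    rw [show -(-t i - t j) = t i + t j by abel, show t i - -t j = t i + t j by abel,
      show -(-t i - -t j) = t i - t j by abel]
    linear_combination ξ i * ξ j * φ (t i - t j) * hs
  simp only [e, ← Finset.mul_sum] at h
  linarith

/-- A positive semidefinite kernel bounded above on the diagonal has nonnegative integral. For an
i.i.d. sample of size `n`, bounding the diagonal terms of `∑ i, ∑ j, K (x i) (x j) ≥ 0` by `C` and
taking expectations gives `0 ≤ n C + n (n - 1) ∬ K`; let `n → ∞`. The diagonal is bounded before
integrating, since `x ↦ K x x` need not be measurable. -/
theorem PSDK.integral_nonneg {X : Type*} [MeasurableSpace X] (μ : Measure X) [IsProbabilityMeasure μ]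
    {K : X → X → ℝ} (hK : PSDK K) (hint : Integrable (Function.uncurry K) (μ.prod μ)) {C : ℝ}
    (hC : ∀ x, K x x ≤ C) : 0 ≤ ∫ p, Function.uncurry K p ∂μ.prod μ := by
  set I := ∫ p, Function.uncurry K p ∂μ.prod μ with hI
  have main : ∀ n : ℕ, 0 ≤ (n : ℝ) * C + (n * (n - 1) : ℝ) * I := by
    intro n
    have hmp : ∀ i j : Fin n, i ≠ j → MeasurePreserving (fun x : Fin n → X => (x i, x j))
        (Measure.pi fun _ => μ) (μ.prod μ) := by
      intro i j hij
      refine ⟨by fun_prop, ?_⟩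
      have h : ProbabilityTheory.IndepFun (fun x : Fin n → X => x i) (fun x => x j)
          (Measure.pi fun _ => μ) := (ProbabilityTheory.iIndepFun_pi (μ := fun _ : Fin n => μ) (X := fun _ => id)
        (fun _ => aemeasurable_id)).indepFun hij
      rw [ProbabilityTheory.indepFun_iff_map_prod_eq_prod_map_map 
        (measurable_pi_apply i).aemeasurable (measurable_pi_apply j).aemeasurable] at h
      refine h.trans ?_
      congr 1
      · exact (measurePreserving_eval (fun _ : Fin n => μ) i).map_eq
      · exact (measurePreserving_eval (fun _ : Fin n => μ) j).map_eq
    have hoff : ∀ i j : Fin n, Integrable (fun x : Fin n → X => if i = j then C else K (x i) (x j))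
        (Measure.pi fun _ => μ) ∧ ∫ x, (if i = j then C else K (x i) (x j))
          ∂(Measure.pi fun _ : Fin n => μ) = if i = j then C else I := by
      intro i j
      by_cases hij : i = j
      · simp [hij]
      · simp only [hij, if_false]
        refine ⟨(hmp i j hij).integrable_comp_of_integrable hint, ?_⟩
        rw [hI, ← (hmp i j hij).map_eq, integral_map (by fun_prop)
          (by rw [(hmp i j hij).map_eq]; exact hint.aestronglyMeasurable)]
        rfl
    have h0 : 0 ≤ ∫ x, ∑ i, ∑ j, (if i = j then C else K (x i) (x j))
        ∂(Measure.pi fun _ : Fin n => μ) := by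
      refine MeasureTheory.integral_nonneg fun x => (hK.2 (Fin n) x 1).trans ?_
      refine Finset.sum_le_sum fun i _ => Finset.sum_le_sum fun j _ => ?_
      by_cases hij : i = j
      · simpa [hij] using hC (x j)
      · simp [hij]
    rw [integral_finsetSum _ fun i _ => integrable_finsetSum _ fun j _ => (hoff i j).1] at h0
    have h1 : ∀ i : Fin n, ∫ x, ∑ j, (if i = j then C else K (x i) (x j))
        ∂(Measure.pi fun _ : Fin n => μ) = ∑ j, if i = j then C else I := fun i => by
      rw [integral_finsetSum _ fun j _ => (hoff i j).1]
      exact Finset.sum_congr rfl fun j _ => (hoff i j).2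
    simp only [h1] at h0
    have e : ∀ i : Fin n, ∑ j, (if i = j then C else I) = C + (n - 1) * I := by
      intro i
      have : ∀ j, (if i = j then C else I) = (if i = j then C - I else 0) + I := by
        intro j; split_ifs <;> ring
      simp only [this, Finset.sum_add_distrib, Finset.sum_ite_eq, Finset.mem_univ, if_true,
        Finset.sum_const, Finset.card_univ, Fintype.card_fin, nsmul_eq_mul]
      ring
    simp only [e, Finset.sum_const, Finset.card_univ, Fintype.card_fin, nsmul_eq_mul] at h0
    linarith
  by_contra hneg
  push Not at hneg
  obtain ⟨n, hn⟩ := exists_nat_gt (1 + |C| / (-I))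
  have h1 : |C| < (n - 1) * (-I) := by
    have : |C| / (-I) < n - 1 := by linarith
    rwa [div_lt_iff₀ (by linarith)] at this
  have h2 := main n
  have hn0 : (0:ℝ) < n := lt_of_lt_of_le (by have : 0 ≤ |C| / (-I) := div_nonneg (abs_nonneg _) (by linarith)
                                             linarith) hn.le
  have h3 : 0 ≤ n * (C + (n - 1) * I) := by linarith
  have h4 := nonneg_of_mul_nonneg_right h3 hn0
  linarith [le_abs_self C]

namespace PSDK
theorem abs_le {G : Type*} [AddCommGroup G] {φ : G → ℝ}
    (hφ : PSDK fun a b => φ (a - b)) (a : G) : |φ a| ≤ φ 0 := by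
  have hev : φ (-a) = φ a := by simpa using hφ.1 0 a
  have h1 := hφ.2 (Fin 2) ![a, 0] ![1, 1]
  have h2 := hφ.2 (Fin 2) ![a, 0] ![1, -1]
  simp [Fin.sum_univ_two, hev] at h1 h2
  rw [_root_.abs_le]; constructor <;> linarith
end PSDK

/-! ### Haar measure of a subgroup -/

/-- `μ` is the Haar probability measure of the subgroup `S`, viewed as a measure on the ambient
group. -/
structure IsHaarOn {X : Type*} [AddCommGroup X] [MeasurableSpace X] (S : AddSubgroup X)
    (μ : Measure X) : Prop where
  prob : IsProbabilityMeasure μ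
  carried : ∀ᵐ x ∂μ, x ∈ S
  inv : ∀ s ∈ S, μ.map (fun x => s + x) = μ

namespace IsHaarOn
variable {X : Type*} [AddCommGroup X] [MeasurableSpace X] [MeasurableAdd₂ X] {S : AddSubgroup X}
  {μ ν : Measure X}

/-- Both measures compute the probability that `p.1 + p.2 ∈ A` under their product: conditioning on
either coordinate, translation invariance applies to the other. -/
theorem unique (hμ : IsHaarOn S μ) (hν : IsHaarOn S ν) : μ = ν := by
  have := hμ.prob
  have := hν.prob
  ext A hA
  have hm : MeasurableSet {p : X × X | p.1 + p.2 ∈ A} :=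
    (measurable_fst.add measurable_snd) hA
  have h1 : ν.prod μ {p : X × X | p.1 + p.2 ∈ A} = μ A := by
    rw [Measure.prod_apply hm, lintegral_congr_ae (g := fun _ => μ A)]
    · simp
    · filter_upwards [hν.carried] with y hy
      conv_rhs => rw [← hμ.inv y hy, Measure.map_apply (measurable_const_add y) hA]
      rfl
  have h2 : ν.prod μ {p : X × X | p.1 + p.2 ∈ A} = ν A := by
    rw [Measure.prod_apply_symm hm, lintegral_congr_ae (g := fun _ => ν A)]
    · simp
    · filter_upwards [hμ.carried] with y hy
      conv_rhs => rw [← hν.inv y hy, Measure.map_apply (measurable_const_add y) hA]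
      simp only [add_comm y]
      rfl
  rw [← h1, h2]

/-- A measurable endomorphism mapping `S` onto itself preserves its Haar measure. -/
theorem map (hμ : IsHaarOn S μ) (hS : MeasurableSet (S : Set X)) (φ : X →+ X) (hφ : Measurable φ)
    (hmem : ∀ s ∈ S, φ s ∈ S) (hsurj : ∀ s ∈ S, ∃ t ∈ S, φ t = s) :
    μ.map φ = μ := by
  have := hμ.prob
  refine IsHaarOn.unique (S := S) ⟨Measure.isProbabilityMeasure_map hφ.aemeasurable, ?_, ?_⟩ hμ
  · refine (ae_map_iff hφ.aemeasurable hS).2 ?_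
    filter_upwards [hμ.carried] with x hx using hmem x hx
  · intro s hs
    obtain ⟨t, ht, rfl⟩ := hsurj s hs
    rw [Measure.map_map (measurable_const_add _) hφ]
    conv_rhs => rw [← hμ.inv t ht, Measure.map_map hφ (measurable_const_add _)]
    congr 1
    ext x
    simp

theorem map_neg [MeasurableNeg X] (hμ : IsHaarOn S μ) (hS : MeasurableSet (S : Set X)) :
    μ.map (fun x => -x) = μ :=
  hμ.map hS (-AddMonoidHom.id X) measurable_neg (fun _ hs => S.neg_mem hs)
    fun s hs => ⟨-s, S.neg_mem hs, neg_neg s⟩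

/-- The duplication map factors as `(a, b) ↦ (a, a + b)`, a swap, and `(c, a) ↦ (c, 2a - c)`. The
last factor uses that doubling preserves the Haar measure, hence divisibility by two. -/
theorem measurePreserving [MeasurableSub₂ X] (hμ : IsHaarOn S μ) (hS : MeasurableSet (S : Set X))
    (hdiv : ∀ s ∈ S, ∃ t ∈ S, t + t = s) :
    MeasurePreserving (fun p : X × X => (p.1 + p.2, p.1 - p.2)) (μ.prod μ) (μ.prod μ) := by
  have := hμ.prob
  have hdbl : μ.map (fun x => x + x) = μ :=
    hμ.map hS (AddMonoidHom.id X + AddMonoidHom.id X) (measurable_id.add measurable_id)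
      (fun s hs => S.add_mem hs hs) hdiv
  have h1 : MeasurePreserving (fun p : X × X => (p.1, p.1 + p.2)) (μ.prod μ) (μ.prod μ) := by
    refine (MeasurePreserving.id μ).skew_product (g := fun a b => a + b) measurable_add ?_
    filter_upwards [hμ.carried] with a ha using hμ.inv a ha
  have h2 : MeasurePreserving (fun p : X × X => (p.1, (p.2 + p.2) - p.1)) (μ.prod μ) (μ.prod μ) := by
    refine (MeasurePreserving.id μ).skew_product (g := fun c a => (a + a) - c)
      (by unfold Function.uncurry; fun_prop) ?_
    filter_upwards [hμ.carried] with c hc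
    have h := hμ.inv (-c) (S.neg_mem hc)
    nth_rewrite 1 [← hdbl] at h
    rw [Measure.map_map (measurable_const_add _) (by fun_prop)] at h
    refine Eq.trans ?_ h
    congr 1
    ext x
    exact sub_eq_neg_add _ _
  have h3 := h2.comp (Measure.measurePreserving_swap.comp h1)
  convert h3 using 1
  ext p
  · rfl
  · simp only [Function.comp, Prod.swap]
    abel

/-- Ginibre's inequality on a subgroup divisible by two: adding the positive definite function `H`
to the exponent `W` of the density does not decrease the expectation of `Φ`, here with cleared
denominators. -/
theorem ginibre [MeasurableSub₂ X] (hμ : IsHaarOn S μ) (hS : MeasurableSet (S : Set X))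
    (hdiv : ∀ s ∈ S, ∃ t ∈ S, t + t = s) {W H Φ : X → ℝ}
    (hW : PSDK fun a b => W (a - b)) (hH : PSDK fun a b => H (a - b))
    (hΦ : PSDK fun a b => Φ (a - b)) (mW : Measurable W) (mH : Measurable H)
    (iΦ : Integrable Φ μ) :
    (∫ x, Φ x * Real.exp (W x) ∂μ) * ∫ x, Real.exp (W x) * Real.exp (H x) ∂μ ≤
      (∫ x, Φ x * (Real.exp (W x) * Real.exp (H x)) ∂μ) * ∫ x, Real.exp (W x) ∂μ := by
  have := hμ.prob
  set w : X → ℝ := fun x => Real.exp (W x) with hw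
  set h : X → ℝ := fun x => Real.exp (H x) with hh
  have Pw : PSDK fun a b => w (a - b) := hW.exp
  have Ph : PSDK fun a b => h (a - b) := hH.exp
  have mw : Measurable w := mW.exp
  have mh : Measurable h := mH.exp
  have bdd : ∀ {g φ : X → ℝ}, Integrable g μ → Measurable φ → (PSDK fun a b => φ (a - b)) →
      Integrable (fun x => g x * φ x) μ := fun ig mφ hφ =>
    ig.mul_bdd mφ.aestronglyMeasurable (Filter.Eventually.of_forall hφ.abs_le)
  have iw : Integrable w μ := by simpa using bdd (integrable_const (1:ℝ)) mw Pw
  have iwh : Integrable (fun x => w x * h x) μ := bdd iw mh Ph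
  have iΦw : Integrable (fun x => Φ x * w x) μ := bdd iΦ mw Pw
  have iΦwh : Integrable (fun x => Φ x * (w x * h x)) μ := by
    simpa only [mul_assoc] using bdd iΦw mh Ph
  let G : X × X → ℝ := fun p => w p.1 * w p.2 * ((Φ p.1 - Φ p.2) * (h p.1 - h p.2))
  have hG : G = fun p => (((Φ p.1 * (w p.1 * h p.1)) * w p.2 + w p.1 * (Φ p.2 * (w p.2 * h p.2)))
      - ((Φ p.1 * w p.1) * (w p.2 * h p.2) + (w p.1 * h p.1) * (Φ p.2 * w p.2))) := by
    funext p; simp only [G]; ring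
  have i1 := iΦwh.mul_prod iw
  have i2 := iw.mul_prod iΦwh
  have i3 := iΦw.mul_prod iwh
  have i4 := iwh.mul_prod iΦw
  have iG : Integrable G (μ.prod μ) := by
    rw [hG]; exact (i1.add i2).sub (i3.add i4)
  have eG : ∫ p, G p ∂μ.prod μ = 2 * ((∫ x, Φ x * (w x * h x) ∂μ) * ∫ x, w x ∂μ)
      - 2 * ((∫ x, Φ x * w x ∂μ) * ∫ x, w x * h x ∂μ) := by
    rw [hG]
    refine (integral_sub (i1.add i2) (i3.add i4)).trans ?_
    simp only [Pi.add_apply]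
    rw [integral_add i1 i2, integral_add i3 i4,
      integral_prod_mul (μ := μ) (ν := μ) (fun x => Φ x * (w x * h x)) w,
      integral_prod_mul (μ := μ) (ν := μ) w (fun x => Φ x * (w x * h x)),
      integral_prod_mul (μ := μ) (ν := μ) (fun x => Φ x * w x) (fun x => w x * h x),
      integral_prod_mul (μ := μ) (ν := μ) (fun x => w x * h x) (fun x => Φ x * w x)]
    ring
  have hT := hμ.measurePreserving hS hdiv
  have PK : PSDK fun a b => G (a + b, a - b) := by
    have k1 := (psdk_double hW (s := 1) (by norm_num)).exp
    have k2 := psdk_double hΦ (s := -1) (by norm_num)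
    have k3 := psdk_double Ph (s := -1) (by norm_num)
    convert k1.mul (k2.mul k3) using 3 with a b
    simp only [G, hw, one_mul, Real.exp_add]
    ring
  have hpos := PK.integral_nonneg μ (C := w 0 * w 0 * ((Φ 0 + Φ 0) * (h 0 + h 0)))
    (hT.integrable_comp_of_integrable iG) (fun x => by
      have b := fun y => (_root_.abs_le.1 (hΦ.abs_le y))
      have c := fun y => (_root_.abs_le.1 (Ph.abs_le y))
      have d := fun y => (Pw.abs_le y)
      refine (le_abs_self _).trans ?_
      simp only [G, abs_mul]
      have t : ∀ {φ : X → ℝ}, (PSDK fun a b => φ (a - b)) → ∀ y z, |φ y - φ z| ≤ φ 0 + φ 0 :=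
        fun hφ y z => (abs_sub _ _).trans (add_le_add (hφ.abs_le y) (hφ.abs_le z))
      have t1 := t hΦ (x + x) (x - x)
      have t2 := t Ph (x + x) (x - x)
      have := (abs_nonneg _).trans t1
      have := (abs_nonneg _).trans (d 0)
      exact mul_le_mul (mul_le_mul (d _) (d _) (abs_nonneg _) this)
        (mul_le_mul t1 t2 (abs_nonneg _) ‹_›) (by positivity) (by positivity))
  have hint : ∫ p, Function.uncurry (fun a b => G (a + b, a - b)) p ∂μ.prod μ
      = ∫ p, G p ∂μ.prod μ := by
    conv_rhs => rw [← hT.map_eq]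
    rw [integral_map hT.measurable.aemeasurable (by rw [hT.map_eq]; exact iG.aestronglyMeasurable)]
    rfl
  rw [hint, eG] at hpos
  linarith
end IsHaarOn
/-! ### Divisibility by two of the kernel of the divergence -/

section Div
variable {V E G : Type*} [Fintype E] [DecidableEq V] [AddCommGroup G] (src tgt : E → V)

theorem divg_add (ω η : E → G) : divg src tgt (ω + η) = divg src tgt ω + divg src tgt η := by
  have key : ∀ (r : E → V) x, (∑ e, if r e = x then (ω + η) e else 0) =
      (∑ e, if r e = x then ω e else 0) + ∑ e, if r e = x then η e else 0 := by
    intro r x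
    rw [← Finset.sum_add_distrib]
    exact Finset.sum_congr rfl fun e _ => by split_ifs <;> simp
  ext x
  rw [Pi.add_apply]
  simp only [divg, key]
  abel

/-- The divergence as a group homomorphism. -/
def divgHom : (E → G) →+ (V → G) := AddMonoidHom.mk' (divg src tgt) (divg_add src tgt)

theorem map_divg {G' : Type*} [AddCommGroup G'] (φ : G →+ G') (ω : E → G) (x : V) :
    φ (divg src tgt ω x) = divg src tgt (fun e => φ (ω e)) x := by
  simp [divg, apply_ite φ]

/-- Summation by parts. -/
theorem sum_nsmul_divg [Fintype V] (n : V → ℕ) (ω : E → G) :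
    ∑ x, n x • divg src tgt ω x = ∑ e, (n (tgt e) • ω e - n (src e) • ω e) := by
  have key : ∀ r : E → V, ∑ x, n x • (∑ e, if r e = x then ω e else 0) = ∑ e, n (r e) • ω e := by
    intro r
    simp_rw [Finset.smul_sum]
    rw [Finset.sum_comm]
    exact Finset.sum_congr rfl fun e _ => by simp [smul_ite]
  simp only [divg, nsmul_sub, Finset.sum_sub_distrib, key]

/-- By linear duality over `ZMod 2`, the range of the divergence consists of the vectors orthogonal
to all `z` that are constant along edges. -/
theorem mem_range_divg [Fintype V] (s : V → ZMod 2)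
    (hs : ∀ z : V → ZMod 2, (∀ e, z (tgt e) = z (src e)) → ∑ x, z x * s x = 0) :
    ∃ κ : E → ZMod 2, divg src tgt κ = s := by
  classical
  let D : (E → ZMod 2) →ₗ[ZMod 2] (V → ZMod 2) :=
    (divgHom src tgt).toZModLinearMap 2
  by_contra hns
  have hns' : s ∉ LinearMap.range D := fun ⟨κ, hκ⟩ => hns ⟨κ, hκ⟩
  obtain ⟨f, hf, hr⟩ := Submodule.exists_le_ker_of_notMem hns'
  have hrep : ∀ v : V → ZMod 2, f v = ∑ x, f (Pi.single x 1) * v x := by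
    intro v
    conv_lhs => rw [pi_eq_sum_univ' v]
    simp only [map_sum, map_smul, smul_eq_mul, mul_comm]
  refine hf ((hrep s).trans (hs _ fun e => ?_))
  have h1 : D (Pi.single e 1) = Pi.single (tgt e) 1 - Pi.single (src e) 1 := by
    ext x
    change divg src tgt (Pi.single e 1) x = _
    have key : ∀ r : E → V, (∑ e', if r e' = x then (Pi.single e 1 : E → ZMod 2) e' else 0) =
        (Pi.single (r e) 1 : V → ZMod 2) x := by
      intro r
      rw [Finset.sum_eq_single e]
      · simp [Pi.single_apply, eq_comm]
      · intro b _ hb; simp [hb]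
      · simp
    simp [divg, key]
  have h2 : f (D (Pi.single e 1)) = 0 := hr ⟨_, rfl⟩
  rw [h1, map_sub] at h2
  exact sub_eq_zero.1 h2

/-- The embedding `ZMod 2 → ℝ/2πℤ` with image the two-torsion subgroup `{0, π}`. -/
def halfTurn : ZMod 2 →+ Real.Angle :=
  ZMod.lift 2 ⟨zmultiplesHom Real.Angle (π : Real.Angle), by simp⟩

theorem halfTurn_one : halfTurn 1 = π := by
  have := ZMod.lift_coe 2 ⟨zmultiplesHom Real.Angle (π : Real.Angle), by simp⟩ 1
  rw [Int.cast_one] at this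
  exact this.trans (by simp)

theorem halfTurn_inj : ∀ a : ZMod 2, halfTurn a = 0 → a = 0 := by
  have h : ∀ a : ZMod 2, a = 0 ∨ a = 1 := by decide
  intro a
  rcases h a with rfl | rfl
  · simp
  · simp [halfTurn_one, Real.Angle.pi_ne_zero]

/-- Halving each angle gives `J₀` whose divergence takes values in `{0, π}`; a two-torsion form with
the same divergence corrects it. -/
theorem exists_half [Fintype V] (J : E → Real.Angle) (hJ : divg src tgt J = 0) :
    ∃ J' : E → Real.Angle, divg src tgt J' = 0 ∧ J' + J' = J := by
  let J₀ : E → Real.Angle := fun e => (((J e).toReal / 2 : ℝ) : Real.Angle)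
  have h0 : J₀ + J₀ = J := by
    ext e
    simp only [J₀, Pi.add_apply, ← Real.Angle.coe_add, add_halves, Real.Angle.coe_toReal]
  have hσ : ∀ x, ∃ s : ZMod 2, halfTurn s = divg src tgt J₀ x := by
    intro x
    have h : (2 : ℕ) • divg src tgt J₀ x = 0 := by
      rw [two_nsmul, ← Pi.add_apply, ← divg_add, h0, hJ]; rfl
    rcases Real.Angle.two_nsmul_eq_zero_iff.1 h with h | h
    · exact ⟨0, by rw [h, map_zero]⟩
    · exact ⟨1, by rw [h, halfTurn_one]⟩
  choose s hs using hσ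
  obtain ⟨κ, hκ⟩ := mem_range_divg src tgt s fun z hz => by
    apply halfTurn_inj
    have hmul : ∀ a b : ZMod 2, a * b = a.val • b := by decide
    simp only [map_sum, hmul, map_nsmul, hs, sum_nsmul_divg, hz, sub_self, Finset.sum_const_zero]
  refine ⟨J₀ + fun e => halfTurn (κ e), ?_, ?_⟩
  · ext x
    have hd : ∀ a : ZMod 2, a + a = 0 := by decide
    rw [divg_add, Pi.add_apply, ← map_divg, hκ, ← hs, ← map_add, hd, map_zero]; rfl
  · have h2 : (fun e => halfTurn (κ e)) + (fun e => halfTurn (κ e)) = (0 : E → Real.Angle) := by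
      have hd : ∀ a : ZMod 2, a + a = 0 := by decide
      ext e; simp only [Pi.add_apply, ← map_add, hd, map_zero, Pi.zero_apply]
    rw [add_add_add_comm, h0, h2, add_zero]
end Div

/-! ### Positive definite functions of an angle -/

instance : BorelSpace Real.Angle := inferInstanceAs (BorelSpace (AddCircle (2 * π)))
instance : SecondCountableTopology Real.Angle :=
  inferInstanceAs (SecondCountableTopology (AddCircle (2 * π)))

section Angle
variable {F : ℝ → ℝ}

theorem eq_of_coe_eq (hper : Function.Periodic F (2 * π)) {s t : ℝ}
    (h : (s : Real.Angle) = t) : F s = F t := by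
  obtain ⟨k, hk⟩ := Real.Angle.angle_eq_iff_two_pi_dvd_sub.1 h
  rw [show s = t + k * (2 * π) by linarith]
  exact hper.int_mul k t

theorem measurable_comp_toReal (hper : Function.Periodic F (2 * π)) (hF : Continuous F) :
    Measurable fun θ : Real.Angle => F θ.toReal := by
  have hq : Topology.IsQuotientMap ((↑) : ℝ → Real.Angle) := QuotientAddGroup.isQuotientMap_mk _
  refine (hq.continuous_iff.2 ?_).measurable
  convert hF using 1
  ext t
  exact eq_of_coe_eq hper (Real.Angle.coe_toReal _)

/-- The even part of a positive definite function yields a kernel; the odd part is unconstrained. -/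
theorem PosDefFn.psdk (hF : PosDefFn F) (hper : Function.Periodic F (2 * π)) :
    PSDK fun a b : Real.Angle => (F (a - b).toReal + F (b - a).toReal) / 2 := by
  refine ⟨fun a b => by simp only [add_comm (F (a - b).toReal)], fun ι _ t ξ => ?_⟩
  have hsub : ∀ a b : Real.Angle, F (a - b).toReal = F (a.toReal - b.toReal) := fun a b =>
    eq_of_coe_eq hper (by simp)
  have h1 : 0 ≤ ∑ i, ∑ j, ξ i * ξ j * F (t i - t j).toReal := by
    have h := hF (Fintype.card ι) (fun i => (t ((Fintype.equivFin ι).symm i)).toReal)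
      (fun i => ξ ((Fintype.equivFin ι).symm i))
    simp only [← hsub] at h
    refine h.trans_eq (Fintype.sum_equiv (Fintype.equivFin ι).symm _ _ fun i => ?_)
    exact Fintype.sum_equiv (Fintype.equivFin ι).symm _ _ fun j => rfl
  have h2 : ∑ i, ∑ j, ξ i * ξ j * F (t j - t i).toReal
      = ∑ i, ∑ j, ξ i * ξ j * F (t i - t j).toReal := by
    rw [Finset.sum_comm]
    exact Finset.sum_congr rfl fun i _ => Finset.sum_congr rfl fun j _ => by ring
  have h3 : ∑ i, ∑ j, ξ i * ξ j * ((F (t i - t j).toReal + F (t j - t i).toReal) / 2)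
      = (∑ i, ∑ j, ξ i * ξ j * F (t i - t j).toReal
        + ∑ i, ∑ j, ξ i * ξ j * F (t j - t i).toReal) / 2 := by
    simp only [← Finset.sum_add_distrib, Finset.sum_div]
    exact Finset.sum_congr rfl fun i _ => Finset.sum_congr rfl fun j _ => by ring
  rw [h3, h2]
  linarith

theorem comp_toReal_neg (hper : Function.Periodic F (2 * π)) (heven : ∀ t, F (-t) = F t)
    (θ : Real.Angle) : F (-θ).toReal = F θ.toReal := by
  rw [← heven θ.toReal]
  exact eq_of_coe_eq hper (by simp)

theorem PosDefFn.psdk_of_even (hF : PosDefFn F) (hper : Function.Periodic F (2 * π))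
    (heven : ∀ t, F (-t) = F t) : PSDK fun a b : Real.Angle => F (a - b).toReal := by
  convert hF.psdk hper using 3 with a b
  rw [← neg_sub a b, comp_toReal_neg hper heven]
  ring
end Angle

/-! ### The divergence-free spin measure -/

theorem IsKerHaar.isHaarOn {V E : Type*} [Fintype E] [DecidableEq V] {src tgt : E → V}
    {lam : Measure (E → Real.Angle)} [Fintype V] (h : IsKerHaar src tgt lam) :
    MeasurableSet ((divgHom (G := Real.Angle) src tgt).ker : Set (E → Real.Angle)) ∧
      IsHaarOn (divgHom (G := Real.Angle) src tgt).ker lam := by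
  obtain ⟨hp, hc, hi⟩ := h
  have hcont : Continuous (divg (G := Real.Angle) src tgt) := by
    have key : ∀ (r : E → V) (x : V), Continuous fun ω : E → Real.Angle =>
        ∑ e, if r e = x then ω e else 0 := fun r x =>
      continuous_finsetSum _ fun e _ => by split_ifs <;> fun_prop
    exact continuous_pi fun x => (key tgt x).sub (key src x)
  have hm : MeasurableSet {J : E → Real.Angle | divg src tgt J = 0} :=
    (isClosed_eq hcont continuous_const).measurableSet
  exact ⟨hm, hp, (mem_ae_iff_prob_eq_one hm).2 hc, hi⟩

/-- **Ginibre inequality for divergence-free spin models.**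
For every positive definite `F : ℝ/2πℤ → ℝ` and all edges `e, f`, the expectation
`μ_{β,⋄}[F(J_f)]` is nondecreasing in `β_e`. -/
theorem ginibre_monotonicity
    {V E : Type*} [Fintype V] [Fintype E] [DecidableEq V]
    (src tgt : E → V)
    (U : E → ℝ → ℝ)
    (hper : ∀ g, Function.Periodic (U g) (2 * π))
    (heven : ∀ g t, U g (-t) = U g t)
    (hC2 : ∀ g, ContDiff ℝ 2 (U g))
    (hpd : ∀ g, PosDefFn fun t => -(U g t))
    (lam : Measure (E → Real.Angle)) (hlam : IsKerHaar src tgt lam)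
    (F : ℝ → ℝ) (hFper : Function.Periodic F (2 * π)) (hF : PosDefFn F)
    (e f : E)
    (β β' : E → ℝ)
    (hβ : ∀ g, 0 ≤ β g) (hβ' : ∀ g, 0 ≤ β' g)
    (hagree : ∀ g, g ≠ e → β g = β' g) (hle : β e ≤ β' e) :
    diamSpinExpB U β lam (fun J => F ((J f).toReal))
      ≤ diamSpinExpB U β' lam (fun J => F ((J f).toReal)) := by
  classical
  obtain ⟨hS, hμ⟩ := hlam.isHaarOn
  have := hμ.prob
  have hdiv : ∀ J ∈ (divgHom (G := Real.Angle) src tgt).ker,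
      ∃ J' ∈ (divgHom (G := Real.Angle) src tgt).ker, J' + J' = J := fun J hJ =>
    exists_half src tgt J hJ
  have kU : ∀ g, PSDK fun A B : E → Real.Angle => -(U g ((A - B) g).toReal) := fun g =>
    ((hpd g).psdk_of_even (fun t => by simp only [hper g t])
      fun t => by simp only [heven g t]).comp fun A : E → Real.Angle => A g
  have mU : ∀ g, Measurable fun J : E → Real.Angle => U g (J g).toReal := fun g =>
    (measurable_comp_toReal (hper g) (hC2 g).continuous).comp (measurable_pi_apply g)
  let W : (E → ℝ) → (E → Real.Angle) → ℝ := fun b J => ∑ g, -(b g) * U g (J g).toReal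
  have kW : ∀ b : E → ℝ, (∀ g, 0 ≤ b g) → PSDK fun A B => W b (A - B) := fun b hb => by
    convert PSDK.sum Finset.univ fun g _ => (kU g).smul (hb g) using 4
    simp only [neg_mul, mul_neg]
  have mW : ∀ b, Measurable (W b) := fun b =>
    Finset.measurable_sum _ fun g _ => (mU g).const_mul _
  have eW : ∀ b J, W b (-J) = W b J := fun b J => by
    simp only [W, Pi.neg_apply, comp_toReal_neg (hper _) (heven _)]
  have iW : ∀ b : E → ℝ, (∀ g, 0 ≤ b g) → Integrable (fun J => Real.exp (W b J)) lam := fun b hb =>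
    (integrable_const (Real.exp (W b 0))).mono' (mW b).exp.aestronglyMeasurable
      (Filter.Eventually.of_forall fun J => by
        rw [Real.norm_eq_abs, Real.abs_exp, Real.exp_le_exp]
        exact (le_abs_self _).trans ((kW b hb).abs_le J))
  have hexp : ∀ b, diamSpinExpB U b lam (fun J => F ((J f).toReal)) =
      (∫ J, F (J f).toReal * Real.exp (W b J) ∂lam) / ∫ J, Real.exp (W b J) ∂lam := fun b => by
    simp only [diamSpinExpB, W, Real.exp_sum]
  rw [hexp, hexp]
  by_cases hint : Integrable (fun J : E → Real.Angle => F (J f).toReal) lam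
  swap
  -- The density is bounded above and below, so both numerators are integrals of nonintegrable
  -- functions and vanish.
  · have hz : ∀ b : E → ℝ, (∀ g, 0 ≤ b g) →
        ∫ J, F (J f).toReal * Real.exp (W b J) ∂lam = 0 := fun b hb => by
      refine integral_undef fun hi => hint ?_
      have h := hi.mul_bdd (g := fun J => Real.exp (-(W b J))) (c := Real.exp (W b 0))
        (mW b).neg.exp.aestronglyMeasurable (Filter.Eventually.of_forall fun J => by
          rw [Real.norm_eq_abs, Real.abs_exp, Real.exp_le_exp]
          exact (neg_le_abs _).trans ((kW b hb).abs_le J))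
      refine h.congr (Filter.Eventually.of_forall fun J => ?_)
      simp only [mul_assoc, ← Real.exp_add, add_neg_cancel, Real.exp_zero, mul_one]
    rw [hz β hβ, hz β' hβ', zero_div, zero_div]
  -- The even part of the observable.
  let Φ : (E → Real.Angle) → ℝ := fun J => (F (J f).toReal + F ((-J) f).toReal) / 2
  have kΦ : PSDK fun A B => Φ (A - B) := by
    convert (hF.psdk hFper).comp fun A : E → Real.Angle => A f using 3
    simp [Φ]
  have hneg : MeasurePreserving (fun J : E → Real.Angle => -J) lam lam :=
    ⟨measurable_neg, hμ.map_neg hS⟩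
  have hint' : Integrable (fun J : E → Real.Angle => F ((-J) f).toReal) lam :=
    hneg.integrable_comp_of_integrable hint
  have iΦ : Integrable Φ lam := (hint.add hint').div_const 2
  have bdd : ∀ b : E → ℝ, (∀ g, 0 ≤ b g) → ∀ φ : (E → Real.Angle) → ℝ, Integrable φ lam →
      Integrable (fun J => φ J * Real.exp (W b J)) lam := fun b hb φ hφ =>
    hφ.mul_bdd (c := Real.exp (W b 0)) (mW b).exp.aestronglyMeasurable
      (Filter.Eventually.of_forall fun J => by
        rw [Real.norm_eq_abs, Real.abs_exp, Real.exp_le_exp]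
        exact (le_abs_self _).trans ((kW b hb).abs_le J))
  have hsymm : ∀ b : E → ℝ, (∀ g, 0 ≤ b g) →
      ∫ J, F (J f).toReal * Real.exp (W b J) ∂lam = ∫ J, Φ J * Real.exp (W b J) ∂lam :=
      fun b hb => by
    have h1 : ∫ J, F ((-J) f).toReal * Real.exp (W b J) ∂lam =
        ∫ J, F (J f).toReal * Real.exp (W b J) ∂lam := by
      rw [← hneg.integral_comp (MeasurableEquiv.neg (E → Real.Angle)).measurableEmbedding
        fun J => F (J f).toReal * Real.exp (W b J)]
      simp only [eW]
    have h2 : ∀ J, Φ J * Real.exp (W b J) =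
        (F (J f).toReal * Real.exp (W b J) + F ((-J) f).toReal * Real.exp (W b J)) / 2 := fun J => by
      simp only [Φ]; ring
    simp only [h2]
    rw [integral_div, integral_add (bdd b hb _ hint) (bdd b hb _ hint'), h1]
    ring
  rw [hsymm β hβ, hsymm β' hβ',
    div_le_div_iff₀ (integral_exp_pos (iW β hβ)) (integral_exp_pos (iW β' hβ'))]
  have hW' : ∀ J, Real.exp (W β' J) =
      Real.exp (W β J) * Real.exp ((β' e - β e) * -(U e (J e).toReal)) := fun J => by
    rw [← Real.exp_add]
    congr 1
    have : W β' J - W β J = (β' e - β e) * -(U e (J e).toReal) := by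
      simp only [W, ← Finset.sum_sub_distrib]
      rw [Finset.sum_eq_single e]
      · ring
      · intro g _ hg; rw [hagree g hg, sub_self]
      · simp
    linarith
  simp only [hW']
  exact hμ.ginibre hS hdiv (kW β hβ) ((kU e).smul (sub_nonneg.2 hle)) kΦ (mW β)
    ((mU e).neg.const_mul _) iΦ
end
end

section
/- Reduction to a pure cosine potential does not increase the variance (Lemma 5.8): Let −𝒰(t) = Σ_{j≥0} α_j cos(jt) with all α_j ≥ 0 and Σ_j j² α_j < ∞, and suppose there is a smallest index i ≥ 1 with α_i > 0; set −𝒰'(t) := α_i cos(it). Fix β ≥ 0 and let ν_{G,β,★} and ν'_{G,β,★} be the height-function measures on G (with boundary vertex ∂) built from the dual potentials of β𝒰 and β𝒰' respectively. Then for every x ∈ V \ {∂}, ν'_{G,β,★}[h_x²] ≤ ν_{G,β,★}[h_x²]. -/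
/-!
The proof uses duplication and Ginibre's inequality. By definition each edge weight is a Fourier
coefficient of `exp (∑ J_j cos(jt))`; the full potential has couplings `J₁ j = β α_j`, and the pure
cosine is the potential whose couplings `J₂` agree with `J₁` at `i` and vanish elsewhere, so that
`|J₂| ≤ J₁`.

Let `p = fc J₁` and `q = fc J₂`. After multiplying by the two partition functions, the difference
of the second moments is the sum over pairs of heights `(h, h')` of
`(h_x² - h'_x²) ∏_e p(dh_e) q(dh'_e)`. With `σ = h + h'` and `τ = h - h'` this becomes the sum over
all `(σ, τ)` of `σ_x τ_x ∏_e Q(dσ_e, dτ_e)`, where `Q = sumDiff p q` is the product weight in the new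
coordinates, set to zero on pairs of different parity; since the graph is connected, a pair whose
gradients all have equal parity comes from a pair `(h, h')`. If `Q` is positive semidefinite, then so
is the summand as a kernel in `(σ, τ)`, and its total sum is nonnegative (`duplicated_nonneg`).

Positive semidefiniteness of `Q` is `limGram_sumDiff`. The double Fourier coefficient of
`exp (∑ J₁ j cos(j(u - v)) + ∑ J₂ j cos(j(u + v)))` gives `Q`, because `(u, v) ↦ (u - v, u + v)`
preserves Haar measure on the torus. Each mode of the exponent equals
`(J₁ + J₂) cos(ju) cos(jv) + (J₁ - J₂) sin(ju) sin(jv)`, a positive semidefinite kernel in `(u, v)`,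
and the class of such kernels is closed under sums, products, limits and Fourier transform.

The rearrangement needs finite second moments. `fc_summable` obtains them from `∑ j² J_j < ∞`, by
testing second differences of the spin weight against Fejér kernels. If the graph is disconnected,
both partition functions diverge, and both sides of the inequality are `0` by the conventions for
`tsum` and division.
-/

open MeasureTheory Real
noncomputable section

/-- Gradient of a `G`-valued function on the vertices: `(df)_e = f(tgt e) - f(src e)`. -/
def grad {V E G : Type*} [AddCommGroup G] (src tgt : E → V) (f : V → G) : E → G :=
  fun e => f (tgt e) - f (src e)

/-- The dual height-function weight `e^{-𝒱_{β}(n)} = (1/2π)∫_{-π}^{π} e^{-β𝒰(t)} e^{-int} dt`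
(real cosine form, valid since `𝒰` is even). -/
def dualWgt (U : ℝ → ℝ) (β : ℝ) (n : ℤ) : ℝ :=
  (1 / (2 * π)) * ∫ t in Set.Ioc (-π) π, Real.exp (-β * U t) * Real.cos (n * t)

/-- Expectation with respect to the height-function measure `ν(h) ∝ Π_e p((dh)_e)` on
functions `h : V → ℤ` with `h ∂ = 0`. -/
def starHeightExp {V E : Type*} [Fintype E] (src tgt : E → V) (bd : V)
    (p : ℤ → ℝ) (F : (V → ℤ) → ℝ) : ℝ :=
  (∑' h : {h : V → ℤ // h bd = 0}, F h.1 * ∏ e, p (grad src tgt h.1 e)) /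
    ∑' h : {h : V → ℤ // h bd = 0}, ∏ e, p (grad src tgt h.1 e)

open Filter Topology

/-! ### Gram kernels and their pointwise limits -/

/-- A kernel that is a finite sum of squares `F k ⊗ F k` of continuous real functions. This is an
explicit form of positive semidefiniteness, visibly stable under products, so that no
Schur product theorem is needed. -/
def Gram {X : Type*} [TopologicalSpace X] (K : X → X → ℝ) : Prop :=
  ∃ (ι : Type) (_ : Fintype ι) (F : ι → X → ℝ), (∀ k, Continuous (F k)) ∧
    ∀ x y, K x y = ∑ k, F k x * F k y

/-- A kernel that is a pointwise limit of a sequence of Gram kernels. -/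
def LimGram {X : Type*} [TopologicalSpace X] (K : X → X → ℝ) : Prop :=
  ∃ L : ℕ → X → X → ℝ, (∀ n, Gram (L n)) ∧
    ∀ x y, Tendsto (fun n => L n x y) atTop (𝓝 (K x y))

section GramLemmas

variable {X : Type*} [TopologicalSpace X]

lemma Gram.congr {K L : X → X → ℝ} (hK : Gram K) (h : ∀ x y, L x y = K x y) : Gram L := by
  obtain ⟨ι, _, F, hF, hKF⟩ := hK
  exact ⟨ι, inferInstance, F, hF, fun x y => (h x y).trans (hKF x y)⟩

lemma Gram.rank_one {f : X → ℝ} (hf : Continuous f) {c : ℝ} (hc : 0 ≤ c) :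
    Gram (fun x y => c * (f x * f y)) := by
  refine ⟨Unit, inferInstance, fun _ x => √c * f x, fun _ => by fun_prop, fun x y => ?_⟩
  simp only [Finset.univ_unique, Finset.sum_singleton]
  linear_combination (-(f x * f y)) * Real.mul_self_sqrt hc

lemma Gram.one : Gram (fun _ _ : X => (1 : ℝ)) :=
  (Gram.rank_one (f := fun _ : X => (1 : ℝ)) continuous_const zero_le_one).congr (by simp)

lemma Gram.zero : Gram (fun _ _ : X => (0 : ℝ)) :=
  (Gram.rank_one (f := fun _ : X => (1 : ℝ)) continuous_const le_rfl).congr (by simp)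

lemma Gram.add {K L : X → X → ℝ} (hK : Gram K) (hL : Gram L) :
    Gram (fun x y => K x y + L x y) := by
  obtain ⟨ι, _, F, hF, hKF⟩ := hK
  obtain ⟨κ, _, G, hG, hLG⟩ := hL
  refine ⟨ι ⊕ κ, inferInstance, Sum.elim F G, ?_, fun x y => ?_⟩
  · rintro (k | k)
    exacts [hF k, hG k]
  · simp [hKF, hLG]

lemma Gram.mul {K L : X → X → ℝ} (hK : Gram K) (hL : Gram L) :
    Gram (fun x y => K x y * L x y) := by
  obtain ⟨ι, _, F, hF, hKF⟩ := hK
  obtain ⟨κ, _, G, hG, hLG⟩ := hL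
  refine ⟨ι × κ, inferInstance, fun k x => F k.1 x * G k.2 x,
    fun k => (hF k.1).mul (hG k.2), fun x y => ?_⟩
  simp only [hKF, hLG, Finset.sum_mul_sum, Fintype.sum_prod_type]
  exact Finset.sum_congr rfl fun i _ => Finset.sum_congr rfl fun j _ => by ring

lemma Gram.const_mul {K : X → X → ℝ} (hK : Gram K) {c : ℝ} (hc : 0 ≤ c) :
    Gram (fun x y => c * K x y) :=
  ((Gram.rank_one (f := fun _ : X => (1 : ℝ)) continuous_const hc).mul hK).congr (by simp)

lemma Gram.sum {ι : Type*} (s : Finset ι) {K : ι → X → X → ℝ} (hK : ∀ i, Gram (K i)) :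
    Gram (fun x y => ∑ i ∈ s, K i x y) := by
  classical
  induction s using Finset.induction_on with
  | empty => simpa using Gram.zero
  | insert a s ha ih => simpa [Finset.sum_insert ha] using (hK a).add ih

lemma Gram.prod {ι : Type*} (s : Finset ι) {K : ι → X → X → ℝ} (hK : ∀ i, Gram (K i)) :
    Gram (fun x y => ∏ i ∈ s, K i x y) := by
  classical
  induction s using Finset.induction_on with
  | empty => simpa using Gram.one
  | insert a s ha ih => simpa [Finset.prod_insert ha] using (hK a).mul ih

lemma Gram.pow {K : X → X → ℝ} (hK : Gram K) (n : ℕ) : Gram (fun x y => K x y ^ n) :=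
  (Gram.prod (Finset.range n) fun _ => hK).congr (by simp)

lemma Gram.comp {Y : Type*} [TopologicalSpace Y] {K : X → X → ℝ} (hK : Gram K) {f : Y → X}
    (hf : Continuous f) : Gram (fun x y => K (f x) (f y)) := by
  obtain ⟨ι, _, F, hF, hKF⟩ := hK
  exact ⟨ι, inferInstance, fun k x => F k (f x), fun k => (hF k).comp hf, fun x y => hKF _ _⟩

lemma Gram.continuous {K : X → X → ℝ} (hK : Gram K) :
    Continuous (fun z : X × X => K z.1 z.2) := by
  obtain ⟨ι, _, F, hF, hKF⟩ := hK
  simp only [hKF]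
  fun_prop

lemma Gram.sum_nonneg {K : X → X → ℝ} (hK : Gram K) (s : Finset X) :
    0 ≤ ∑ z ∈ s ×ˢ s, K z.1 z.2 := by
  obtain ⟨ι, _, F, hF, hKF⟩ := hK
  rw [Finset.sum_product]
  simp only [hKF]
  have : ∑ x ∈ s, ∑ y ∈ s, ∑ k, F k x * F k y = ∑ k, (∑ x ∈ s, F k x) ^ 2 := by
    simp only [sq, Finset.sum_mul_sum]
    rw [Finset.sum_comm]
    rw [Finset.sum_congr rfl fun y _ => Finset.sum_comm, Finset.sum_comm]
    exact Finset.sum_congr rfl fun k _ => Finset.sum_comm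
  rw [this]
  positivity

lemma LimGram.mul {K L : X → X → ℝ} (hK : LimGram K) (hL : LimGram L) :
    LimGram (fun x y => K x y * L x y) := by
  obtain ⟨K', hK', hKl⟩ := hK
  obtain ⟨L', hL', hLl⟩ := hL
  exact ⟨fun n x y => K' n x y * L' n x y, fun n => (hK' n).mul (hL' n),
    fun x y => (hKl x y).mul (hLl x y)⟩

lemma Gram.limGram {K : X → X → ℝ} (hK : Gram K) : LimGram K :=
  ⟨fun _ => K, fun _ => hK, fun _ _ => tendsto_const_nhds⟩

lemma LimGram.prod {ι : Type*} [Fintype ι] {K : X → X → ℝ} (hK : LimGram K)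
    {Y : Type*} [TopologicalSpace Y] {f : ι → Y → X} (hf : ∀ i, Continuous (f i)) :
    LimGram (fun x y => ∏ i, K (f i x) (f i y)) := by
  obtain ⟨K', hK', hKl⟩ := hK
  exact ⟨fun n x y => ∏ i, K' n (f i x) (f i y),
    fun n => Gram.prod _ fun i => (hK' n).comp (hf i),
    fun x y => tendsto_finsetProd _ fun i _ => hKl _ _⟩

lemma LimGram.sum_nonneg {K : X → X → ℝ} (hK : LimGram K) (s : Finset X) :
    0 ≤ ∑ z ∈ s ×ˢ s, K z.1 z.2 := by
  obtain ⟨K', hK', hKl⟩ := hK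
  exact ge_of_tendsto' (tendsto_finsetSum _ fun z _ => hKl z.1 z.2) fun n => (hK' n).sum_nonneg s

lemma LimGram.tsum_nonneg {K : X → X → ℝ} (hK : LimGram K)
    (hs : Summable fun z : X × X => K z.1 z.2) : 0 ≤ ∑' z : X × X, K z.1 z.2 := by
  classical
  -- squares `s ×ˢ s` are cofinal among the finite subsets of `X × X`
  have hcof : Tendsto (fun s : Finset X => s ×ˢ s) atTop atTop := by
    refine tendsto_atTop.2 fun b => ?_
    filter_upwards [eventually_ge_atTop (b.image Prod.fst ∪ b.image Prod.snd)] with s hs z hz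
    exact Finset.mem_product.2
      ⟨hs (Finset.mem_union_left _ (Finset.mem_image_of_mem _ hz)),
        hs (Finset.mem_union_right _ (Finset.mem_image_of_mem _ hz))⟩
  exact ge_of_tendsto' (hs.hasSum.comp hcof) fun s => hK.sum_nonneg s

end GramLemmas

/-! ### The spin weights and their Fourier coefficients -/

/-- The exponent `∑_j J_j cos(jt)` of a spin weight with couplings `J`. -/
def ang (J : ℕ → ℝ) (t : ℝ) : ℝ := ∑' j : ℕ, J j * Real.cos (j * t)

/-- The `n`-th Fourier coefficient of the even weight `exp (∑_j J_j cos(jt))`. -/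
def fc (J : ℕ → ℝ) (n : ℤ) : ℝ :=
  (1 / (2 * π)) * ∫ t in (-π)..π, Real.exp (ang J t) * Real.cos (n * t)

lemma abs_mul_cos_le (a y : ℝ) : |a * Real.cos y| ≤ |a| := by
  rw [abs_mul]
  exact mul_le_of_le_one_right (abs_nonneg _) (Real.abs_cos_le_one _)

lemma ang_summable {J : ℕ → ℝ} (hJ : Summable fun j => |J j|) (t : ℝ) :
    Summable fun j : ℕ => J j * Real.cos (j * t) :=
  Summable.of_norm_bounded hJ fun _ => abs_mul_cos_le _ _

lemma ang_continuous {J : ℕ → ℝ} (hJ : Summable fun j => |J j|) : Continuous (ang J) :=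
  continuous_tsum (fun _ => by fun_prop) hJ fun _ _ => abs_mul_cos_le _ _

lemma ang_even (J : ℕ → ℝ) (t : ℝ) : ang J (-t) = ang J t := by
  simp [ang]

lemma ang_periodic (J : ℕ → ℝ) : Function.Periodic (ang J) (2 * π) := by
  intro t
  unfold ang
  refine tsum_congr fun j => ?_
  rw [mul_add, Real.cos_add_nat_mul_two_pi]

lemma fc_even (J : ℕ → ℝ) (n : ℤ) : fc J (-n) = fc J n := by
  simp [fc]

lemma fc_zero_pos {J : ℕ → ℝ} (hJ : Summable fun j => |J j|) : 0 < fc J 0 := by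
  have hc := ang_continuous hJ
  have : 0 < ∫ t in (-π)..π, Real.exp (ang J t) :=
    intervalIntegral.intervalIntegral_pos_of_pos
      ((by fun_prop : Continuous fun t => Real.exp (ang J t)).intervalIntegrable _ _)
      (fun _ => Real.exp_pos _) (by linarith [Real.pi_pos])
  simp only [fc, Int.cast_zero, zero_mul, Real.cos_zero, mul_one]
  have := Real.pi_pos
  positivity

lemma integral_exp_ang_mul_sin (J : ℕ → ℝ) (n : ℤ) :
    ∫ t in (-π)..π, Real.exp (ang J t) * Real.sin (n * t) = 0 := by
  have h := intervalIntegral.integral_comp_neg (a := -π) (b := π)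
    (fun t => Real.exp (ang J t) * Real.sin (n * t))
  simp only [ang_even, mul_neg, Real.sin_neg, neg_neg, intervalIntegral.integral_neg] at h
  linarith

lemma periodic_integral_shift {f : ℝ → ℝ} (hf : Function.Periodic f (2 * π)) (a : ℝ) :
    ∫ t in (-π)..π, f (t + a) = ∫ t in (-π)..π, f t := by
  rw [intervalIntegral.integral_comp_add_right]
  have := hf.intervalIntegral_add_eq (-π + a) (-π)
  rw [show -π + a + 2 * π = π + a by ring, show -π + 2 * π = π by ring] at this
  exact this

lemma integral_swap_cont {f : ℝ → ℝ → ℝ} (hf : Continuous (Function.uncurry f)) :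
    ∫ u in (-π)..π, ∫ v in (-π)..π, f u v = ∫ v in (-π)..π, ∫ u in (-π)..π, f u v := by
  have h : (-π : ℝ) ≤ π := by linarith [Real.pi_pos]
  simp only [intervalIntegral.integral_of_le h]
  refine integral_integral_swap ?_
  rw [Measure.prod_restrict]
  exact (hf.continuousOn.integrableOn_compact (isCompact_Icc.prod isCompact_Icc)).mono_set
    (Set.prod_mono Set.Ioc_subset_Icc_self Set.Ioc_subset_Icc_self)

/-- The endomorphism `(u, v) ↦ (u - v, u + v)` of the torus preserves the normalised Haar
measure. -/
lemma integral_rotate {G H : ℝ → ℝ} (hG : Continuous G) (hH : Continuous H)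
    (hGp : Function.Periodic G (2 * π)) (hHp : Function.Periodic H (2 * π)) :
    ∫ u in (-π)..π, ∫ v in (-π)..π, G (u - v) * H (u + v)
      = (∫ t in (-π)..π, G t) * ∫ t in (-π)..π, H t := by
  rw [integral_swap_cont (by fun_prop)]
  have h1 : ∀ v, ∫ u in (-π)..π, G (u - v) * H (u + v)
      = ∫ u in (-π)..π, G u * H (u + 2 * v) := by
    intro v
    rw [← periodic_integral_shift (f := fun u => G u * H (u + 2 * v)) _ (-v)]
    · refine intervalIntegral.integral_congr fun u _ => ?_
      congr 2
      ring
    · intro u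
      simp only []
      rw [hGp u, show u + 2 * π + 2 * v = u + 2 * v + 2 * π by ring, hHp]
  have h2 : ∀ u, ∫ v in (-π)..π, H (u + 2 * v) = ∫ t in (-π)..π, H t := by
    intro u
    rw [intervalIntegral.integral_comp_add_mul _ two_ne_zero]
    have e1 := hHp.intervalIntegral_add_eq (u + 2 * -π) (-π)
    have e2 := hHp.intervalIntegral_add_eq u (-π)
    rw [show -π + 2 * π = π by ring] at e1 e2
    rw [show u + 2 * -π + 2 * π = u by ring] at e1
    rw [← intervalIntegral.integral_add_adjacent_intervals (b := u)
      (hH.intervalIntegrable _ _) (hH.intervalIntegrable _ _), e1,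
      show u + 2 * π = u + 2 * π from rfl, e2, smul_eq_mul]
    ring
  simp only [h1]
  rw [integral_swap_cont (by fun_prop)]
  simp only [intervalIntegral.integral_const_mul, h2, intervalIntegral.integral_mul_const]

/-- Fourier transform of a Gram kernel on the torus, in the variable `(σ, -τ)`, is a Gram kernel
on the integers. -/
lemma Gram.fourier {W : ℝ → ℝ → ℝ} (hW : Gram W) :
    Gram (fun σ τ : ℤ => ∫ u in (-π)..π, ∫ v in (-π)..π, W u v * Real.cos (σ * u - τ * v)) := by
  obtain ⟨ι, _, F, hF, hWF⟩ := hW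
  refine ⟨ι ⊕ ι, inferInstance,
    Sum.elim (fun k σ => ∫ u in (-π)..π, F k u * Real.cos (σ * u))
      (fun k σ => ∫ u in (-π)..π, F k u * Real.sin (σ * u)),
    fun _ => continuous_of_discreteTopology, fun σ τ => ?_⟩
  have e : ∀ u v : ℝ, W u v * Real.cos (σ * u - τ * v)
      = ∑ k, (F k u * Real.cos (σ * u) * (F k v * Real.cos (τ * v))
        + F k u * Real.sin (σ * u) * (F k v * Real.sin (τ * v))) := by
    intro u v
    rw [hWF, Real.cos_sub, Finset.sum_mul]
    exact Finset.sum_congr rfl fun k _ => by ring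
  have hi : ∀ u : ℝ, ∫ v in (-π)..π, W u v * Real.cos (σ * u - τ * v)
      = ∑ k, (F k u * Real.cos (σ * u) * (∫ v in (-π)..π, F k v * Real.cos (τ * v))
        + F k u * Real.sin (σ * u) * ∫ v in (-π)..π, F k v * Real.sin (τ * v)) := by
    intro u
    simp only [e]
    rw [intervalIntegral.integral_finsetSum
      fun k _ => Continuous.intervalIntegrable (by fun_prop) _ _]
    refine Finset.sum_congr rfl fun k _ => ?_
    rw [intervalIntegral.integral_add (Continuous.intervalIntegrable (by fun_prop) _ _)
      (Continuous.intervalIntegrable (by fun_prop) _ _),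
      intervalIntegral.integral_const_mul, intervalIntegral.integral_const_mul]
  simp only [hi]
  rw [intervalIntegral.integral_finsetSum
    fun k _ => Continuous.intervalIntegrable (by fun_prop) _ _]
  simp only [Fintype.sum_sum_type, Sum.elim_inl, Sum.elim_inr]
  rw [← Finset.sum_add_distrib]
  refine Finset.sum_congr rfl fun k _ => ?_
  rw [intervalIntegral.integral_add (Continuous.intervalIntegrable (by fun_prop) _ _)
    (Continuous.intervalIntegrable (by fun_prop) _ _),
    intervalIntegral.integral_mul_const, intervalIntegral.integral_mul_const]

/-! ### The two-replica kernel in sum and difference coordinates -/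

/-- Partial sums of the two-replica exponent at angles `u - v` and `u + v`. -/
def trunc (J₁ J₂ : ℕ → ℝ) (n : ℕ) (u v : ℝ) : ℝ :=
  ∑ j ∈ Finset.range n, (J₁ j * Real.cos (j * (u - v)) + J₂ j * Real.cos (j * (u + v)))

/-- Ginibre's observation: in the rotated angles each mode of the two-replica exponent equals
`(J₁ + J₂) cos(ju) cos(jv) + (J₁ - J₂) sin(ju) sin(jv)`, with nonnegative coefficients. -/
lemma trunc_gram {J₁ J₂ : ℕ → ℝ} (h : ∀ j, |J₂ j| ≤ J₁ j) (n : ℕ) : Gram (trunc J₁ J₂ n) := by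
  refine Gram.sum _ fun j => ?_
  have hj := abs_le.1 (h j)
  refine ((Gram.rank_one (f := fun u : ℝ => Real.cos (j * u)) (by fun_prop)
    (by linarith : 0 ≤ J₁ j + J₂ j)).add
    (Gram.rank_one (f := fun u : ℝ => Real.sin (j * u)) (by fun_prop)
    (by linarith : 0 ≤ J₁ j - J₂ j))).congr fun u v => ?_
  rw [mul_sub, mul_add, Real.cos_sub, Real.cos_add]
  ring

lemma trunc_abs_le {J₁ J₂ : ℕ → ℝ} (h1 : Summable fun j => |J₁ j|) (h : ∀ j, |J₂ j| ≤ J₁ j)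
    (n : ℕ) (u v : ℝ) : |trunc J₁ J₂ n u v| ≤ 2 * ∑' j, |J₁ j| := by
  refine (Finset.abs_sum_le_sum_abs _ _).trans ?_
  refine le_trans ?_ (mul_le_mul_of_nonneg_left
    (h1.sum_le_tsum (Finset.range n) fun _ _ => abs_nonneg _) zero_le_two)
  rw [Finset.mul_sum]
  refine Finset.sum_le_sum fun j _ => (abs_add_le _ _).trans ?_
  have e1 := abs_mul_cos_le (J₁ j) (j * (u - v))
  have e2 := abs_mul_cos_le (J₂ j) (j * (u + v))
  have := (h j).trans (le_abs_self _)
  linarith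

lemma trunc_tendsto {J₁ J₂ : ℕ → ℝ} (h1 : Summable fun j => |J₁ j|)
    (h2 : Summable fun j => |J₂ j|) (u v : ℝ) :
    Tendsto (fun n => trunc J₁ J₂ n u v) atTop (𝓝 (ang J₁ (u - v) + ang J₂ (u + v))) := by
  have := ((ang_summable h1 (u - v)).hasSum.add (ang_summable h2 (u + v)).hasSum).tendsto_sum_nat
  exact this

lemma one_add_div_pow_abs_le {x B : ℝ} (hx : |x| ≤ B) (n : ℕ) :
    |(1 + x / n) ^ n| ≤ Real.exp B := by
  rcases Nat.eq_zero_or_pos n with rfl | hn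
  · simpa using (abs_nonneg x).trans hx
  have hn' : (0 : ℝ) < n := by exact_mod_cast hn
  have h1 : |1 + x / n| ≤ Real.exp (|x| / n) := by
    refine (abs_add_le _ _).trans ?_
    rw [abs_one, abs_div, Nat.abs_cast, add_comm]
    exact Real.add_one_le_exp _
  rw [abs_pow]
  calc |1 + x / n| ^ n ≤ Real.exp (|x| / n) ^ n := pow_le_pow_left₀ (abs_nonneg _) h1 n
    _ = Real.exp |x| := by rw [← Real.exp_nat_mul]; congr 1; field_simp
    _ ≤ Real.exp B := Real.exp_le_exp.2 hx

lemma tendsto_double_integral {f : ℕ → ℝ → ℝ → ℝ} {g : ℝ → ℝ → ℝ} {B : ℝ}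
    (hf : ∀ n, Continuous (Function.uncurry (f n))) (hB : ∀ n u v, |f n u v| ≤ B)
    (hlim : ∀ u v, Tendsto (fun n => f n u v) atTop (𝓝 (g u v))) :
    Tendsto (fun n => ∫ u in (-π)..π, ∫ v in (-π)..π, f n u v) atTop
      (𝓝 (∫ u in (-π)..π, ∫ v in (-π)..π, g u v)) := by
  refine intervalIntegral.tendsto_integral_filter_of_dominated_convergence
    (fun _ => B * |π - -π|) (Eventually.of_forall fun n => ?_)
    (Eventually.of_forall fun n => ae_of_all _ fun u _ => ?_) intervalIntegrable_const
    (ae_of_all _ fun u _ => ?_)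
  · exact (intervalIntegral.continuous_parametric_intervalIntegral_of_continuous'
      (hf n) _ _).aestronglyMeasurable
  · exact intervalIntegral.norm_integral_le_of_norm_le_const fun v _ => hB n u v
  · refine intervalIntegral.tendsto_integral_filter_of_dominated_convergence
      (fun _ => B) (Eventually.of_forall fun n => ?_)
      (Eventually.of_forall fun n => ae_of_all _ fun v _ => hB n u v) intervalIntegrable_const
      (ae_of_all _ fun v _ => hlim u v)
    exact ((hf n).comp (by fun_prop : Continuous fun v => (u, v))).aestronglyMeasurable

/-- Positive semidefiniteness of the two-replica exponent passes to its exponential and then to the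
Fourier coefficients. -/
lemma limGram_integral {J₁ J₂ : ℕ → ℝ} (h1 : Summable fun j => |J₁ j|)
    (h : ∀ j, |J₂ j| ≤ J₁ j) :
    LimGram (fun σ τ : ℤ => ∫ u in (-π)..π, ∫ v in (-π)..π,
      Real.exp (ang J₁ (u - v) + ang J₂ (u + v)) * Real.cos (σ * u - τ * v)) := by
  have h2 : Summable fun j => |J₂ j| :=
    h1.of_nonneg_of_le (fun _ => abs_nonneg _) fun j => (h j).trans (le_abs_self _)
  -- approximate the exponential by `(1 + X / n) ^ n`, which is a Gram kernel when `X` is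
  have hW : ∀ n : ℕ, Gram (fun u v => (1 + trunc J₁ J₂ n u v / n) ^ n) := fun n =>
    (Gram.one.add (((trunc_gram h n).const_mul (inv_nonneg.2 n.cast_nonneg)).congr
      fun u v => by rw [div_eq_inv_mul])).pow n
  refine ⟨_, fun n => (hW n).fourier, fun σ τ => ?_⟩
  refine tendsto_double_integral (B := Real.exp (2 * ∑' j, |J₁ j|)) (fun n => ?_)
    (fun n u v => ?_) (fun u v => ?_)
  · have := (hW n).continuous
    simp only [Function.uncurry_def]
    exact this.mul (by fun_prop)
  · exact (abs_mul_cos_le _ _).trans (one_add_div_pow_abs_le (trunc_abs_le h1 h n u v) n)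
  · refine Tendsto.mul_const _ (Real.tendsto_one_add_pow_exp_of_tendsto ?_)
    refine (trunc_tendsto h1 h2 u v).congr' ?_
    filter_upwards [eventually_ge_atTop 1] with n hn
    have : (n : ℝ) ≠ 0 := by positivity
    field_simp

/-- The rotation of the torus turns the two-replica Fourier coefficient at frequencies `n + m` and
`n - m` into the product of the coefficients of the two replicas. -/
lemma integral_eq_fc {J₁ J₂ : ℕ → ℝ} (h1 : Summable fun j => |J₁ j|)
    (h2 : Summable fun j => |J₂ j|) (n m : ℤ) :
    ∫ u in (-π)..π, ∫ v in (-π)..π, Real.exp (ang J₁ (u - v) + ang J₂ (u + v)) *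
      Real.cos (((n + m : ℤ) : ℝ) * u - ((n - m : ℤ) : ℝ) * v)
      = (2 * π) ^ 2 * (fc J₁ n * fc J₂ m) := by
  have c1 := ang_continuous h1
  have c2 := ang_continuous h2
  have pc : ∀ (J : ℕ → ℝ) (k : ℤ),
      Function.Periodic (fun t => Real.exp (ang J t) * Real.cos (k * t)) (2 * π) := by
    intro J k t
    simp only [ang_periodic J t, mul_add, Real.cos_add_int_mul_two_pi]
  have ps : ∀ (J : ℕ → ℝ) (k : ℤ),
      Function.Periodic (fun t => Real.exp (ang J t) * Real.sin (k * t)) (2 * π) := by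
    intro J k t
    simp only [ang_periodic J t, mul_add, Real.sin_add_int_mul_two_pi]
  have e : ∀ u v : ℝ, Real.exp (ang J₁ (u - v) + ang J₂ (u + v)) *
      Real.cos (((n + m : ℤ) : ℝ) * u - ((n - m : ℤ) : ℝ) * v)
      = (Real.exp (ang J₁ (u - v)) * Real.cos (n * (u - v))) *
          (Real.exp (ang J₂ (u + v)) * Real.cos (m * (u + v)))
        - (Real.exp (ang J₁ (u - v)) * Real.sin (n * (u - v))) *
          (Real.exp (ang J₂ (u + v)) * Real.sin (m * (u + v))) := by
    intro u v
    rw [show ((n + m : ℤ) : ℝ) * u - ((n - m : ℤ) : ℝ) * v = n * (u - v) + m * (u + v) by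
      push_cast; ring, Real.cos_add, Real.exp_add]
    ring
  simp only [e]
  have hi : ∀ u : ℝ, ∫ v in (-π)..π,
      ((Real.exp (ang J₁ (u - v)) * Real.cos (n * (u - v))) *
          (Real.exp (ang J₂ (u + v)) * Real.cos (m * (u + v)))
        - (Real.exp (ang J₁ (u - v)) * Real.sin (n * (u - v))) *
          (Real.exp (ang J₂ (u + v)) * Real.sin (m * (u + v)))) = _ := fun u =>
    intervalIntegral.integral_sub (Continuous.intervalIntegrable (by fun_prop) _ _)
      (Continuous.intervalIntegrable (by fun_prop) _ _)
  simp only [hi]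
  rw [intervalIntegral.integral_sub
    ((intervalIntegral.continuous_parametric_intervalIntegral_of_continuous'
      (by fun_prop) _ _).intervalIntegrable _ _)
    ((intervalIntegral.continuous_parametric_intervalIntegral_of_continuous'
      (by fun_prop) _ _).intervalIntegrable _ _)]
  have r1 := integral_rotate (G := fun t => Real.exp (ang J₁ t) * Real.cos (n * t))
    (H := fun t => Real.exp (ang J₂ t) * Real.cos (m * t)) (by fun_prop) (by fun_prop)
    (pc J₁ n) (pc J₂ m)
  have r2 := integral_rotate (G := fun t => Real.exp (ang J₁ t) * Real.sin (n * t))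
    (H := fun t => Real.exp (ang J₂ t) * Real.sin (m * t)) (by fun_prop) (by fun_prop)
    (ps J₁ n) (ps J₂ m)
  rw [integral_exp_ang_mul_sin, zero_mul] at r2
  rw [r1, r2, sub_zero, fc, fc]
  have := Real.pi_ne_zero
  field_simp

/-- The product weight `p(n) q(m)` in the coordinates `σ = n + m`, `τ = n - m`, extended by zero to
pairs of different parity. -/
def sumDiff (p q : ℤ → ℝ) (σ τ : ℤ) : ℝ :=
  if Even (σ - τ) then p ((σ + τ) / 2) * q ((σ - τ) / 2) else 0

lemma sumDiff_apply (p q : ℤ → ℝ) (n m : ℤ) : sumDiff p q (n + m) (n - m) = p n * q m := by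
  have h1 : n + m - (n - m) = 2 * m := by ring
  have h2 : n + m + (n - m) = 2 * n := by ring
  rw [sumDiff, h1, h2, if_pos (even_two_mul m)]
  simp

lemma sumDiff_of_odd (p q : ℤ → ℝ) {σ τ : ℤ} (h : ¬Even (σ - τ)) : sumDiff p q σ τ = 0 :=
  if_neg h

lemma gram_parity : Gram (fun σ τ : ℤ => if Even (σ - τ) then (1 : ℝ) else 0) := by
  refine ((Gram.rank_one (f := fun σ : ℤ => if Even σ then (1 : ℝ) else 0)
    continuous_of_discreteTopology zero_le_one).add
    (Gram.rank_one (f := fun σ : ℤ => if Even σ then (0 : ℝ) else 1)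
    continuous_of_discreteTopology zero_le_one)).congr fun σ τ => ?_
  by_cases h1 : Even σ <;> by_cases h2 : Even τ <;> simp [h1, h2, Int.even_sub]

/-- Ginibre's inequality on a single edge: when the first replica has the larger couplings, the
two-replica weight is positive semidefinite in the sum and difference coordinates. -/
lemma limGram_sumDiff {J₁ J₂ : ℕ → ℝ} (h1 : Summable fun j => |J₁ j|)
    (h : ∀ j, |J₂ j| ≤ J₁ j) : LimGram (sumDiff (fc J₁) (fc J₂)) := by
  have h2 : Summable fun j => |J₂ j| :=
    h1.of_nonneg_of_le (fun _ => abs_nonneg _) fun j => (h j).trans (le_abs_self _)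
  have key := (gram_parity.const_mul
    (inv_nonneg.2 (sq_nonneg (2 * π)))).limGram.mul (limGram_integral h1 h)
  convert key using 3 with σ τ
  by_cases hp : Even (σ - τ)
  · obtain ⟨m, hm⟩ := hp
    obtain rfl : σ = (m + τ) + m := by linarith
    have e := integral_eq_fc h1 h2 (m + τ) m
    have e' := sumDiff_apply (fc J₁) (fc J₂) (m + τ) m
    rw [show m + τ - m = τ by ring] at e e'
    rw [e, e', if_pos ⟨m, by ring⟩]
    have := Real.pi_ne_zero
    field_simp
  · rw [sumDiff_of_odd _ _ hp, if_neg hp, mul_zero, zero_mul]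

lemma LimGram.diag_nonneg {X : Type*} [TopologicalSpace X] {K : X → X → ℝ} (hK : LimGram K)
    (x : X) : 0 ≤ K x x := by
  simpa using hK.sum_nonneg {x}

lemma fc_nonneg {J : ℕ → ℝ} (h1 : Summable fun j => |J j|) (h : ∀ j, 0 ≤ J j) (n : ℤ) :
    0 ≤ fc J n := by
  have := (limGram_sumDiff h1 (fun j => (abs_of_nonneg (h j)).le)).diag_nonneg n
  have e := sumDiff_apply (fc J) (fc J) n 0
  rw [add_zero, sub_zero] at e
  rw [e] at this
  exact nonneg_of_mul_nonneg_left this (fc_zero_pos h1)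

/-! ### Summability of the second moments -/

lemma integral_cos_int_mul {n : ℤ} (hn : n ≠ 0) : ∫ t in (-π)..π, Real.cos (n * t) = 0 := by
  have h : (n : ℝ) ≠ 0 := by exact_mod_cast hn
  rw [intervalIntegral.integral_comp_mul_left _ h, integral_cos]
  simp

/-- Nonnegative Fourier coefficients of a function bounded above have bounded sums; the test
function is the Fejér kernel `|∑_{k < N} e^{ikt}|²`. -/
lemma fejer_bound {f : ℝ → ℝ} (hf : Continuous f) {M : ℝ} (hM : ∀ t, f t ≤ M) {c : ℤ → ℝ}
    (hc : ∀ n : ℤ, c n = (1 / (2 * π)) * ∫ t in (-π)..π, f t * Real.cos (n * t))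
    (hc0 : ∀ n, 0 ≤ c n) (S : Finset ℤ) : ∑ n ∈ S, c n ≤ 3 * M := by
  have hpi := Real.pi_pos
  have upper : ∀ N : ℕ, ∑ l ∈ Finset.range N, ∑ k ∈ Finset.range N, c ((k : ℤ) - l) ≤ N * M := by
    intro N
    set D : ℝ → ℝ := fun t => ∑ l ∈ Finset.range N, ∑ k ∈ Finset.range N,
      Real.cos ((((k : ℤ) - l : ℤ) : ℝ) * t) with hD
    have hDc : Continuous D := by fun_prop
    have hD0 : ∀ t, 0 ≤ D t := by
      intro t
      have : D t = (∑ k ∈ Finset.range N, Real.cos (k * t)) ^ 2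
          + (∑ k ∈ Finset.range N, Real.sin (k * t)) ^ 2 := by
        simp only [hD, sq, Finset.sum_mul_sum, ← Finset.sum_add_distrib]
        refine Finset.sum_congr rfl fun l _ => Finset.sum_congr rfl fun k _ => ?_
        push_cast
        rw [sub_mul, Real.cos_sub]
        ring
      rw [this]
      positivity
    have e1 : ∑ l ∈ Finset.range N, ∑ k ∈ Finset.range N, c ((k : ℤ) - l)
        = (1 / (2 * π)) * ∫ t in (-π)..π, f t * D t := by
      simp only [hc, hD, Finset.mul_sum]
      rw [intervalIntegral.integral_finsetSum
        fun l _ => Continuous.intervalIntegrable (by fun_prop) _ _, Finset.mul_sum]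
      refine Finset.sum_congr rfl fun l _ => ?_
      rw [intervalIntegral.integral_finsetSum
        fun l _ => Continuous.intervalIntegrable (by fun_prop) _ _, Finset.mul_sum]
    have e2 : ∫ t in (-π)..π, M * D t = M * (N * (2 * π)) := by
      rw [intervalIntegral.integral_const_mul]
      congr 1
      simp only [hD]
      rw [intervalIntegral.integral_finsetSum
        fun l _ => Continuous.intervalIntegrable (by fun_prop) _ _]
      have : ∀ l ∈ Finset.range N, ∫ t in (-π)..π, ∑ k ∈ Finset.range N,
          Real.cos ((((k : ℤ) - l : ℤ) : ℝ) * t) = 2 * π := by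
        intro l hl
        rw [intervalIntegral.integral_finsetSum
          fun l _ => Continuous.intervalIntegrable (by fun_prop) _ _,
          Finset.sum_eq_single_of_mem l hl]
        · simp
          ring
        · intro k _ hk
          exact integral_cos_int_mul (by omega)
      rw [Finset.sum_congr rfl this]
      simp
    have e3 : ∫ t in (-π)..π, f t * D t ≤ ∫ t in (-π)..π, M * D t :=
      intervalIntegral.integral_mono_on (by linarith)
        (Continuous.intervalIntegrable (by fun_prop) _ _)
        (Continuous.intervalIntegrable (by fun_prop) _ _)
        fun t _ => mul_le_mul_of_nonneg_right (hM t) (hD0 t)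
    rw [e1]
    calc (1 / (2 * π)) * ∫ t in (-π)..π, f t * D t
        ≤ (1 / (2 * π)) * (M * (N * (2 * π))) :=
          mul_le_mul_of_nonneg_left (e3.trans_eq e2) (by positivity)
      _ = N * M := by field_simp
  obtain ⟨L, hL, hSL⟩ : ∃ L : ℕ, 0 < L ∧ ∀ d ∈ S, |d| ≤ L := by
    refine ⟨(∑ d ∈ S, d.natAbs) + 1, by omega, fun d hd => ?_⟩
    have : d.natAbs ≤ ∑ d ∈ S, d.natAbs :=
      Finset.single_le_sum (f := fun d : ℤ => d.natAbs) (fun _ _ => Nat.zero_le _) hd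
    rw [Int.abs_eq_natAbs]
    exact_mod_cast this.trans (Nat.le_succ _)
  have hL' : (0 : ℝ) < L := by exact_mod_cast hL
  -- each of the middle `L` rows of the `3L × 3L` array contains all differences from `S`
  have row : ∀ l ∈ Finset.Ico L (2 * L),
      ∑ n ∈ S, c n ≤ ∑ k ∈ Finset.range (3 * L), c ((k : ℤ) - l) := by
    intro l hl
    rw [Finset.mem_Ico] at hl
    rw [← Finset.sum_image (s := Finset.range (3 * L)) (g := fun k : ℕ => (k : ℤ) - l) (f := c)
      (fun a _ b _ h => by simp only at h; omega)]
    refine Finset.sum_le_sum_of_subset_of_nonneg (fun d hd => ?_) fun n _ _ => hc0 n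
    have := abs_le.1 (hSL d hd)
    refine Finset.mem_image.2 ⟨(d + l).toNat, Finset.mem_range.2 (by omega), by omega⟩
  have h1 : L * ∑ n ∈ S, c n
      ≤ ∑ l ∈ Finset.Ico L (2 * L), ∑ k ∈ Finset.range (3 * L), c ((k : ℤ) - l) := by
    refine le_trans ?_ (Finset.sum_le_sum row)
    simp [two_mul]
  have h2 : ∑ l ∈ Finset.Ico L (2 * L), ∑ k ∈ Finset.range (3 * L), c ((k : ℤ) - l)
      ≤ ∑ l ∈ Finset.range (3 * L), ∑ k ∈ Finset.range (3 * L), c ((k : ℤ) - l) := by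
    refine Finset.sum_le_sum_of_subset_of_nonneg (fun l hl => ?_)
      fun _ _ _ => Finset.sum_nonneg fun _ _ => hc0 _
    simp only [Finset.mem_Ico, Finset.mem_range] at *
    omega
  have h3 := (h1.trans h2).trans (upper (3 * L))
  push_cast at h3
  nlinarith

lemma integral_exp_ang_shift (J : ℕ → ℝ) (hJ : Summable fun j => |J j|) (n : ℤ) (s : ℝ) :
    ∫ t in (-π)..π, Real.exp (ang J (t + s)) * Real.cos (n * t)
      = Real.cos (n * s) * ∫ t in (-π)..π, Real.exp (ang J t) * Real.cos (n * t) := by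
  have hc := ang_continuous hJ
  have h := periodic_integral_shift
    (f := fun t => Real.exp (ang J t) * Real.cos (n * (t - s))) (fun t => by
      simp only [ang_periodic J t]
      rw [show (n : ℝ) * (t + 2 * π - s) = n * (t - s) + n * (2 * π) by ring,
        Real.cos_add_int_mul_two_pi]) s
  simp only [add_sub_cancel_right] at h
  rw [h]
  have e : ∀ t, Real.exp (ang J t) * Real.cos (n * (t - s))
      = Real.cos (n * s) * (Real.exp (ang J t) * Real.cos (n * t))
        + Real.sin (n * s) * (Real.exp (ang J t) * Real.sin (n * t)) := by
    intro t
    rw [mul_sub, Real.cos_sub]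
    ring
  simp only [e]
  rw [intervalIntegral.integral_add (Continuous.intervalIntegrable (by fun_prop) _ _)
    (Continuous.intervalIntegrable (by fun_prop) _ _), intervalIntegral.integral_const_mul,
    intervalIntegral.integral_const_mul, integral_exp_ang_mul_sin, mul_zero, add_zero]

lemma ang_le {J : ℕ → ℝ} (hJ : Summable fun j => |J j|) (t : ℝ) : ang J t ≤ ∑' j, |J j| :=
  (ang_summable hJ t).tsum_le_tsum (fun _ => (le_abs_self _).trans (abs_mul_cos_le _ _)) hJ

lemma ang_second_diff {J : ℕ → ℝ} (hJ : Summable fun j => |J j|) (h0 : ∀ j, 0 ≤ J j)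
    (h2 : Summable fun j : ℕ => (j : ℝ) ^ 2 * J j) (t s : ℝ) :
    2 * ang J t - ang J (t + s) - ang J (t - s) ≤ s ^ 2 * ∑' j : ℕ, (j : ℝ) ^ 2 * J j := by
  have H := (((ang_summable hJ t).hasSum.mul_left 2).sub (ang_summable hJ (t + s)).hasSum).sub
    (ang_summable hJ (t - s)).hasSum
  refine hasSum_le (fun j => ?_) H (h2.hasSum.mul_left (s ^ 2))
  have e : 2 * (J j * Real.cos (j * t)) - J j * Real.cos (j * (t + s))
      - J j * Real.cos (j * (t - s)) = J j * (2 * (Real.cos (j * t) * (1 - Real.cos (j * s)))) := by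
    rw [mul_add, mul_sub, Real.cos_add, Real.cos_sub]
    ring
  rw [e]
  have a1 := Real.one_sub_sq_div_two_le_cos (x := j * s)
  have a2 := Real.cos_le_one (j * s)
  have a3 : Real.cos (j * t) * (1 - Real.cos (j * s)) ≤ 1 - Real.cos (j * s) :=
    mul_le_of_le_one_left (by linarith) (Real.cos_le_one _)
  calc J j * (2 * (Real.cos (j * t) * (1 - Real.cos (j * s))))
      ≤ J j * ((j * s) ^ 2) := mul_le_mul_of_nonneg_left (by linarith) (h0 j)
    _ = s ^ 2 * ((j : ℝ) ^ 2 * J j) := by ring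

lemma exp_second_diff_le {a b c B K : ℝ} (ha : a ≤ B) (hK : 2 * a - b - c ≤ K) (hK0 : 0 ≤ K) :
    2 * Real.exp a - Real.exp b - Real.exp c ≤ Real.exp B * K := by
  have key : ∀ y, Real.exp a * (y - a + 1) ≤ Real.exp y := by
    intro y
    calc Real.exp a * (y - a + 1) ≤ Real.exp a * Real.exp (y - a) :=
          mul_le_mul_of_nonneg_left (Real.add_one_le_exp _) (Real.exp_pos _).le
      _ = Real.exp y := by rw [← Real.exp_add]; congr 1; ring
  have h1 := key b
  have h2 := key c
  calc 2 * Real.exp a - Real.exp b - Real.exp c ≤ Real.exp a * (2 * a - b - c) := by linarith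
    _ ≤ Real.exp a * K := mul_le_mul_of_nonneg_left hK (Real.exp_pos _).le
    _ ≤ Real.exp B * K := mul_le_mul_of_nonneg_right (Real.exp_le_exp.2 ha) hK0

lemma sq_le_one_sub_cos {x : ℝ} (hx : |x| ≤ 1) : x ^ 2 ≤ 4 * (1 - Real.cos x) := by
  have h := (abs_le.1 (Real.cos_bound hx)).2
  have h4 : |x| ^ 4 ≤ x ^ 2 := by
    rw [← sq_abs x]
    exact pow_le_pow_of_le_one (abs_nonneg _) hx (by norm_num)
  linarith [sq_nonneg x]

/-- The second moment of the Fourier weights is finite. The finite sums of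
`2 (1 - cos(ns)) fc J n`, which are Fourier coefficients of the symmetric second difference
of the spin weight, are `O(s²)`; then `s` is taken small. -/
lemma fc_summable {J : ℕ → ℝ} (hJ : Summable fun j => |J j|) (h0 : ∀ j, 0 ≤ J j)
    (h2 : Summable fun j : ℕ => (j : ℝ) ^ 2 * J j) :
    Summable fun n : ℤ => (1 + (n : ℝ) ^ 2) * fc J n := by
  have hc := ang_continuous hJ
  set B : ℝ := ∑' j, |J j|
  set K : ℝ := ∑' j : ℕ, (j : ℝ) ^ 2 * J j with hK
  have hK0 : 0 ≤ K := tsum_nonneg fun j => mul_nonneg (sq_nonneg _) (h0 j)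
  have main : ∀ (s : ℝ) (S : Finset ℤ), ∑ n ∈ S, 2 * (1 - Real.cos (n * s)) * fc J n
      ≤ 3 * (Real.exp B * (s ^ 2 * K)) := by
    intro s S
    refine fejer_bound
      (f := fun t => 2 * Real.exp (ang J t) - Real.exp (ang J (t + s)) - Real.exp (ang J (t - s)))
      (by fun_prop)
      (fun t => exp_second_diff_le (ang_le hJ t) (ang_second_diff hJ h0 h2 t s) (by positivity))
      (fun n => ?_) (fun n => ?_) S
    · have s1 := integral_exp_ang_shift J hJ n s
      have s2 := integral_exp_ang_shift J hJ n (-s)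
      simp only [← sub_eq_add_neg, mul_neg, Real.cos_neg] at s2
      simp only [sub_mul, mul_assoc]
      rw [intervalIntegral.integral_sub (Continuous.intervalIntegrable (by fun_prop) _ _)
        (Continuous.intervalIntegrable (by fun_prop) _ _),
        intervalIntegral.integral_sub (Continuous.intervalIntegrable (by fun_prop) _ _)
        (Continuous.intervalIntegrable (by fun_prop) _ _), intervalIntegral.integral_const_mul,
        s1, s2, fc]
      ring
    · have := Real.cos_le_one (n * s)
      exact mul_nonneg (by linarith) (fc_nonneg hJ h0 n)
  have hsq : Summable fun n : ℤ => (n : ℝ) ^ 2 * fc J n := by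
    refine summable_of_sum_le (c := 6 * (Real.exp B * K))
      (fun n => mul_nonneg (sq_nonneg _) (fc_nonneg hJ h0 n)) fun S => ?_
    set A : ℝ := 1 + ∑ n ∈ S, |(n : ℝ)| with hA
    have hA1 : 1 ≤ A := by
      have : 0 ≤ ∑ n ∈ S, |(n : ℝ)| := Finset.sum_nonneg fun _ _ => abs_nonneg _
      linarith
    have hA0 : 0 < A := by linarith
    have hm := main A⁻¹ S
    have hle : ∑ n ∈ S, (A⁻¹ ^ 2 / 2) * ((n : ℝ) ^ 2 * fc J n)
        ≤ ∑ n ∈ S, 2 * (1 - Real.cos (n * A⁻¹)) * fc J n := by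
      refine Finset.sum_le_sum fun n hn => ?_
      have hnA : |(n : ℝ) * A⁻¹| ≤ 1 := by
        rw [abs_mul, abs_inv, abs_of_pos hA0, ← div_eq_mul_inv, div_le_one hA0]
        have := Finset.single_le_sum (f := fun n : ℤ => |(n : ℝ)|) (fun _ _ => abs_nonneg _) hn
        linarith
      have := sq_le_one_sub_cos hnA
      have hp := fc_nonneg hJ h0 n
      calc (A⁻¹ ^ 2 / 2) * ((n : ℝ) ^ 2 * fc J n) = ((n * A⁻¹) ^ 2 / 2) * fc J n := by ring
        _ ≤ _ := mul_le_mul_of_nonneg_right (by linarith) hp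
    rw [← Finset.mul_sum] at hle
    have hAi : 0 < A⁻¹ ^ 2 := by positivity
    have h3 := hle.trans hm
    have h4 : A⁻¹ ^ 2 * ∑ n ∈ S, (n : ℝ) ^ 2 * fc J n ≤ A⁻¹ ^ 2 * (6 * (Real.exp B * K)) := by
      linarith
    exact le_of_mul_le_mul_left h4 hAi
  have hz : Summable fun n : ℤ => if n = 0 then fc J 0 else 0 :=
    (hasSum_ite_eq (0 : ℤ) (fc J 0)).summable
  refine ((hsq.mul_left 2).add hz).of_nonneg_of_le
    (fun n => mul_nonneg (by positivity) (fc_nonneg hJ h0 n)) fun n => ?_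
  have hp := fc_nonneg hJ h0 n
  by_cases hn : n = 0
  · simp [hn]
  · have h1 : (1 : ℝ) ≤ (n : ℝ) ^ 2 := by
      have : (1 : ℤ) ≤ n ^ 2 := by have := sq_pos_of_ne_zero hn; omega
      exact_mod_cast this
    rw [if_neg hn]
    nlinarith

/-! ### Height functions on a connected graph -/

lemma summable_pi_prod {E : Type*} [Fintype E] {f : ℤ → ℝ} (hf : ∀ n, 0 ≤ f n)
    (hs : Summable f) : Summable fun n : E → ℤ => ∏ e, f (n e) := by
  classical
  refine summable_of_sum_le (c := ∏ _e : E, ∑' n, f n)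
    (fun n => Finset.prod_nonneg fun _ _ => hf _) fun S => ?_
  set T : E → Finset ℤ := fun e => S.image fun n => n e
  have h1 : ∑ n ∈ S, ∏ e, f (n e) ≤ ∑ n ∈ Fintype.piFinset T, ∏ e, f (n e) :=
    Finset.sum_le_sum_of_subset_of_nonneg
      (fun n hn => Fintype.mem_piFinset.2 fun e => Finset.mem_image_of_mem _ hn)
      fun _ _ _ => Finset.prod_nonneg fun _ _ => hf _
  have h2 : ∏ e, ∑ k ∈ T e, f k = ∑ n ∈ Fintype.piFinset T, ∏ e, f (n e) :=
    Finset.prod_univ_sum T fun _ k => f k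
  have h3 : ∀ e, 0 ≤ ∑ k ∈ T e, f k := fun e => Finset.sum_nonneg fun k _ => hf k
  have h4 : ∀ e, ∑ k ∈ T e, f k ≤ ∑' n, f n := fun e => hs.sum_le_tsum _ fun k _ => hf k
  have h5 : ∏ e, ∑ k ∈ T e, f k ≤ ∏ _e : E, ∑' n, f n :=
    Finset.prod_le_prod (fun e _ => h3 e) fun e _ => h4 e
  exact (h1.trans_eq h2.symm).trans h5

lemma one_add_sum_sq_le_prod {E : Type*} (s : Finset E) (d : E → ℝ) :
    1 + ∑ e ∈ s, d e ^ 2 ≤ ∏ e ∈ s, (1 + d e ^ 2) := by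
  classical
  induction s using Finset.induction_on with
  | empty => simp
  | insert a s ha ih =>
    rw [Finset.sum_insert ha, Finset.prod_insert ha]
    have : 0 ≤ ∑ e ∈ s, d e ^ 2 := Finset.sum_nonneg fun _ _ => sq_nonneg _
    nlinarith [mul_le_mul_of_nonneg_left ih (by positivity : 0 ≤ 1 + d a ^ 2), sq_nonneg (d a)]

section Heights

variable {V E : Type*} (src tgt : E → V)

/-- Two vertices are joined by a path, irrespective of the orientation of the edges. -/
def Linked (a b : V) : Prop := Relation.EqvGen (fun a b => ∃ e, src e = a ∧ tgt e = b) a b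

variable {src tgt}

lemma Linked.even_sub {a b : V} (hab : Linked src tgt a b) {d : V → ℤ}
    (hd : ∀ e, Even (grad src tgt d e)) : Even (d b - d a) := by
  induction hab with
  | rel a b h =>
    obtain ⟨e, rfl, rfl⟩ := h
    exact hd e
  | refl a => simp
  | symm a b _ ih => rw [← neg_sub]; exact ih.neg
  | trans a b c _ _ ih1 ih2 =>
    have := ih1.add ih2
    rwa [show d b - d a + (d c - d b) = d c - d a by ring] at this

lemma Linked.bound [Fintype E] {a b : V} (hab : Linked src tgt a b) :
    ∃ C : ℝ, ∀ h : V → ℤ, |(h b : ℝ) - h a| ≤ C * ∑ e, |((grad src tgt h e : ℤ) : ℝ)| := by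
  induction hab with
  | rel a b h =>
    obtain ⟨e, rfl, rfl⟩ := h
    refine ⟨1, fun h => ?_⟩
    have := Finset.single_le_sum (f := fun e => |((grad src tgt h e : ℤ) : ℝ)|)
      (fun _ _ => abs_nonneg _) (Finset.mem_univ e)
    simpa [grad] using this
  | refl a => exact ⟨0, by simp⟩
  | symm a b _ ih =>
    obtain ⟨C, hC⟩ := ih
    exact ⟨C, fun h => by rw [abs_sub_comm]; exact hC h⟩
  | trans a b c _ _ ih1 ih2 =>
    obtain ⟨C, hC⟩ := ih1
    obtain ⟨D, hD⟩ := ih2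
    refine ⟨C + D, fun h => ?_⟩
    have := abs_sub_le (h c : ℝ) (h b) (h a)
    linarith [hC h, hD h]

/-- On a disconnected graph the partition function diverges, because the heights on a component
avoiding the boundary vertex can be translated freely; its `tsum` is then `0`. -/
lemma tsum_eq_zero_of_not_joined [Fintype E] {bd v : V} (hv : ¬Linked src tgt bd v)
    {p : ℤ → ℝ} (hp0 : 0 < p 0) :
    ∑' h : {h : V → ℤ // h bd = 0}, ∏ e, p (grad src tgt h.1 e) = 0 := by
  classical
  refine tsum_eq_zero_of_not_summable fun hs => ?_
  let φ : ℤ → {h : V → ℤ // h bd = 0} := fun k =>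
    ⟨fun w => if Linked src tgt bd w then 0 else k, if_pos (Relation.EqvGen.refl _)⟩
  have hφ : Function.Injective φ := by
    intro k l hkl
    have := congrFun (congrArg Subtype.val hkl) v
    simpa [φ, hv] using this
  have h0 : ∀ k e, grad src tgt (φ k).1 e = 0 := by
    intro k e
    have : Linked src tgt bd (tgt e) ↔ Linked src tgt bd (src e) :=
      ⟨fun h => h.trans _ _ _ (Relation.EqvGen.symm _ _ (.rel _ _ ⟨e, rfl, rfl⟩)),
        fun h => h.trans _ _ _ (.rel _ _ ⟨e, rfl, rfl⟩)⟩
    simp [grad, φ, this]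
  have h1 := hs.comp_injective hφ
  simp only [Function.comp_def, h0, summable_const_iff] at h1
  exact (Finset.prod_pos fun _ _ => hp0).ne' h1

lemma summable_height [Fintype E] {bd : V} (hconn : ∀ v, Linked src tgt bd v) (x : V)
    {p : ℤ → ℝ} (hp : ∀ n, 0 ≤ p n) (hps : Summable fun n : ℤ => (1 + (n : ℝ) ^ 2) * p n) :
    Summable fun h : {h : V → ℤ // h bd = 0} =>
      (1 + (h.1 x : ℝ) ^ 2) * ∏ e, p (grad src tgt h.1 e) := by
  have hinj : Function.Injective fun h : {h : V → ℤ // h bd = 0} => grad src tgt h.1 := by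
    intro h h' hh
    ext v
    obtain ⟨C, hC⟩ := (hconn v).bound
    have h0 : ∀ e, grad src tgt (h.1 - h'.1) e = 0 := by
      intro e
      have := congrFun hh e
      simp only [grad, Pi.sub_apply] at *
      linarith
    have := hC (h.1 - h'.1)
    simp only [h0, Int.cast_zero, abs_zero, Finset.sum_const_zero, mul_zero, Pi.sub_apply,
      h.2, h'.2, sub_self, sub_zero] at this
    have := abs_nonpos_iff.1 this
    have : h.1 v - h'.1 v = 0 := by exact_mod_cast this
    linarith
  have hS := (summable_pi_prod (E := E)
    (fun n => mul_nonneg (by positivity) (hp n)) hps).comp_injective hinj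
  obtain ⟨C, hC⟩ := (hconn x).bound
  refine (hS.mul_left (1 + C ^ 2 * Fintype.card E)).of_nonneg_of_le
    (fun h => mul_nonneg (by positivity) (Finset.prod_nonneg fun _ _ => hp _)) fun h => ?_
  simp only [Function.comp_apply, Finset.prod_mul_distrib]
  rw [← mul_assoc]
  refine mul_le_mul_of_nonneg_right ?_ (Finset.prod_nonneg fun _ _ => hp _)
  have h1 := hC h.1
  rw [h.2, Int.cast_zero, sub_zero] at h1
  have h2 : (h.1 x : ℝ) ^ 2 ≤ (C * ∑ e, |((grad src tgt h.1 e : ℤ) : ℝ)|) ^ 2 := sq_le_sq' (by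
    linarith [neg_abs_le (h.1 x : ℝ)]) ((le_abs_self _).trans h1)
  have h3 := sq_sum_le_card_mul_sum_sq (s := (Finset.univ : Finset E))
    (f := fun e => |((grad src tgt h.1 e : ℤ) : ℝ)|)
  simp only [sq_abs, Finset.card_univ] at h3
  have h4 := one_add_sum_sq_le_prod Finset.univ fun e => ((grad src tgt h.1 e : ℤ) : ℝ)
  have h5 : 0 ≤ ∑ e, ((grad src tgt h.1 e : ℤ) : ℝ) ^ 2 := Finset.sum_nonneg fun _ _ => sq_nonneg _
  have h6 : 0 ≤ C ^ 2 * (Fintype.card E : ℝ) := by positivity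
  rw [mul_pow] at h2
  nlinarith [mul_le_mul_of_nonneg_left h3 (sq_nonneg C), mul_le_mul_of_nonneg_left h4 h6]

lemma grad_continuous {bd : V} (e : E) :
    Continuous fun h : {h : V → ℤ // h bd = 0} => grad src tgt h.1 e := by
  have hv : ∀ v : V, Continuous fun h : {h : V → ℤ // h bd = 0} => h.1 v := fun v =>
    (continuous_apply v).comp continuous_subtype_val
  exact (hv (tgt e)).sub (hv (src e))

/-- The duplicated second-moment inequality: the sum over pairs of heights is rewritten in the
variables `h + h'` and `h - h'`, where it becomes the total sum of a positive semidefinite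
kernel. -/
lemma duplicated_nonneg [Fintype E] {bd : V} (hconn : ∀ v, Linked src tgt bd v) (x : V)
    {p q : ℤ → ℝ} (hQ : LimGram (sumDiff p q))
    (hs : Summable fun z : {h : V → ℤ // h bd = 0} × {h : V → ℤ // h bd = 0} =>
      ((z.1.1 x : ℝ) ^ 2 - (z.2.1 x : ℝ) ^ 2) *
        ((∏ e, p (grad src tgt z.1.1 e)) * ∏ e, q (grad src tgt z.2.1 e))) :
    0 ≤ ∑' z : {h : V → ℤ // h bd = 0} × {h : V → ℤ // h bd = 0},
      ((z.1.1 x : ℝ) ^ 2 - (z.2.1 x : ℝ) ^ 2) *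
        ((∏ e, p (grad src tgt z.1.1 e)) * ∏ e, q (grad src tgt z.2.1 e)) := by
  set H := {h : V → ℤ // h bd = 0}
  let K : H → H → ℝ := fun σ τ => (1 * ((σ.1 x : ℝ) * (τ.1 x : ℝ))) *
    ∏ e, sumDiff p q (grad src tgt σ.1 e) (grad src tgt τ.1 e)
  have hK : LimGram K :=
    (Gram.rank_one (f := fun σ : H => (σ.1 x : ℝ))
      (continuous_of_discreteTopology.comp
        ((continuous_apply x).comp continuous_subtype_val)) zero_le_one).limGram.mul
      (hQ.prod fun e => grad_continuous e)
  let Φ : H × H → H × H := fun z =>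
    (⟨fun v => z.1.1 v + z.2.1 v, by simp [z.1.2, z.2.2]⟩,
      ⟨fun v => z.1.1 v - z.2.1 v, by simp [z.1.2, z.2.2]⟩)
  have hΦ : Function.Injective Φ := by
    intro z w hzw
    have h1 : ∀ v, z.1.1 v + z.2.1 v = w.1.1 v + w.2.1 v := fun v =>
      congrFun (congrArg (fun y : H × H => y.1.1) hzw) v
    have h2 : ∀ v, z.1.1 v - z.2.1 v = w.1.1 v - w.2.1 v := fun v =>
      congrFun (congrArg (fun y : H × H => y.2.1) hzw) v
    refine Prod.ext (Subtype.ext (funext fun v => ?_)) (Subtype.ext (funext fun v => ?_))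
    · linarith [h1 v, h2 v]
    · linarith [h1 v, h2 v]
  have hval : ∀ z : H × H, K (Φ z).1 (Φ z).2 = ((z.1.1 x : ℝ) ^ 2 - (z.2.1 x : ℝ) ^ 2) *
        ((∏ e, p (grad src tgt z.1.1 e)) * ∏ e, q (grad src tgt z.2.1 e)) := by
    intro z
    have e : ∀ e, sumDiff p q (grad src tgt (Φ z).1.1 e) (grad src tgt (Φ z).2.1 e)
        = p (grad src tgt z.1.1 e) * q (grad src tgt z.2.1 e) := by
      intro e
      rw [← sumDiff_apply]
      congr 1 <;> simp only [grad, Φ] <;> ring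
    simp only [K, e, Finset.prod_mul_distrib]
    simp only [Φ]
    push_cast
    ring
  -- off the range of `Φ` some edge has gradients of different parity, so the kernel vanishes
  have hrange : Function.support (fun z : H × H => K z.1 z.2) ⊆ Set.range Φ := by
    rintro ⟨σ, τ⟩ hz
    have hprod := right_ne_zero_of_mul (Function.mem_support.1 hz)
    have hpar : ∀ e, Even (grad src tgt (fun v => σ.1 v - τ.1 v) e) := by
      intro e
      by_contra hne
      refine Finset.prod_ne_zero_iff.1 hprod e (Finset.mem_univ e) (sumDiff_of_odd _ _ ?_)
      convert hne using 2
      simp only [grad]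
      ring
    have hev : ∀ v, ∃ m, σ.1 v - τ.1 v = m + m := by
      intro v
      have h := (hconn v).even_sub hpar
      simp only [σ.2, τ.2, sub_self, sub_zero] at h
      exact h
    choose m hm using hev
    refine ⟨(⟨fun v => τ.1 v + m v, ?_⟩, ⟨m, ?_⟩), ?_⟩
    · have := hm bd
      simp only [σ.2, τ.2] at *
      omega
    · have := hm bd
      simp only [σ.2, τ.2] at *
      omega
    · refine Prod.ext (Subtype.ext (funext fun v => ?_)) (Subtype.ext (funext fun v => ?_))
      · have := hm v
        simp only [Φ]
        omega
      · simp only [Φ]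
        omega
  have hsum : Summable fun z : H × H => K z.1 z.2 := by
    refine (hΦ.summable_iff fun z hz => ?_).1 (hs.congr fun z => (hval z).symm)
    by_contra hne
    exact hz (hrange hne)
  have := hK.tsum_nonneg hsum
  rw [← hΦ.tsum_eq hrange] at this
  simpa only [hval] using this

/-- Monotonicity of the second moment: after multiplying out the two partition functions, the
difference of the two sides is the sum in `duplicated_nonneg`. -/
lemma starHeightExp_mono [Fintype E] (src tgt : E → V) (bd x : V) {p q : ℤ → ℝ}
    (hp : ∀ n, 0 ≤ p n) (hq : ∀ n, 0 ≤ q n) (hp0 : 0 < p 0) (hq0 : 0 < q 0)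
    (hps : Summable fun n : ℤ => (1 + (n : ℝ) ^ 2) * p n)
    (hqs : Summable fun n : ℤ => (1 + (n : ℝ) ^ 2) * q n)
    (hQ : LimGram (sumDiff p q)) :
    starHeightExp src tgt bd q (fun h => ((h x : ℤ) : ℝ) ^ 2)
      ≤ starHeightExp src tgt bd p (fun h => ((h x : ℤ) : ℝ) ^ 2) := by
  by_cases hconn : ∀ v, Linked src tgt bd v
  swap
  · obtain ⟨v, hv⟩ := not_forall.1 hconn
    simp [starHeightExp, tsum_eq_zero_of_not_joined hv hp0, tsum_eq_zero_of_not_joined hv hq0]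
  unfold starHeightExp
  have parts : ∀ r : ℤ → ℝ, (∀ n, 0 ≤ r n) → 0 < r 0 →
      (Summable fun n : ℤ => (1 + (n : ℝ) ^ 2) * r n) →
      (Summable fun h : {h : V → ℤ // h bd = 0} => ∏ e, r (grad src tgt h.1 e)) ∧
      (Summable fun h : {h : V → ℤ // h bd = 0} =>
        (h.1 x : ℝ) ^ 2 * ∏ e, r (grad src tgt h.1 e)) ∧
      0 < ∑' h : {h : V → ℤ // h bd = 0}, ∏ e, r (grad src tgt h.1 e) := by
    intro r hr hr0 hrs
    have hS := summable_height hconn x hr hrs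
    have hw : ∀ h : {h : V → ℤ // h bd = 0}, 0 ≤ ∏ e, r (grad src tgt h.1 e) :=
      fun h => Finset.prod_nonneg fun _ _ => hr _
    have h1 : Summable fun h : {h : V → ℤ // h bd = 0} => ∏ e, r (grad src tgt h.1 e) :=
      hS.of_nonneg_of_le hw fun h =>
        le_mul_of_one_le_left (hw h) (by linarith [sq_nonneg (h.1 x : ℝ)])
    refine ⟨h1, hS.of_nonneg_of_le (fun h => mul_nonneg (sq_nonneg _) (hw h)) fun h =>
      mul_le_mul_of_nonneg_right (by linarith) (hw h), ?_⟩
    refine h1.tsum_pos hw ⟨0, rfl⟩ (Finset.prod_pos fun e _ => ?_)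
    simpa [grad] using hr0
  obtain ⟨p1, p2, pZ⟩ := parts p hp hp0 hps
  obtain ⟨q1, q2, qZ⟩ := parts q hq hq0 hqs
  have wp : ∀ h : {h : V → ℤ // h bd = 0}, 0 ≤ ∏ e, p (grad src tgt h.1 e) :=
    fun h => Finset.prod_nonneg fun _ _ => hp _
  have wq : ∀ h : {h : V → ℤ // h bd = 0}, 0 ≤ ∏ e, q (grad src tgt h.1 e) :=
    fun h => Finset.prod_nonneg fun _ _ => hq _
  have s1 := p2.mul_of_nonneg q1 (fun h => mul_nonneg (sq_nonneg _) (wp h)) wq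
  have s2 := p1.mul_of_nonneg q2 wp (fun h => mul_nonneg (sq_nonneg _) (wq h))
  have e1 := p2.tsum_mul_tsum q1 s1
  have e2 := p1.tsum_mul_tsum q2 s2
  have hd := duplicated_nonneg hconn x hQ ((s1.sub s2).congr fun z => by ring)
  rw [tsum_congr (fun z => by ring :
    ∀ z : {h : V → ℤ // h bd = 0} × {h : V → ℤ // h bd = 0},
      ((z.1.1 x : ℝ) ^ 2 - (z.2.1 x : ℝ) ^ 2) *
        ((∏ e, p (grad src tgt z.1.1 e)) * ∏ e, q (grad src tgt z.2.1 e))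
      = ((z.1.1 x : ℝ) ^ 2 * ∏ e, p (grad src tgt z.1.1 e)) * (∏ e, q (grad src tgt z.2.1 e))
        - (∏ e, p (grad src tgt z.1.1 e)) *
          ((z.2.1 x : ℝ) ^ 2 * ∏ e, q (grad src tgt z.2.1 e))), s1.tsum_sub s2,
    ← e1, ← e2] at hd
  rw [div_le_div_iff₀ qZ pZ]
  linarith

end Heights

lemma dualWgt_eq_fc {U : ℝ → ℝ} {β : ℝ} {J : ℕ → ℝ} (h : ∀ t, -β * U t = ang J t) (n : ℤ) :
    dualWgt U β n = fc J n := by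
  rw [dualWgt, fc, intervalIntegral.integral_of_le (by linarith [Real.pi_pos])]
  simp only [h]


/-- **Reduction to a pure cosine potential does not increase the variance.**
Let `-𝒰(t) = Σ_{j≥0} α_j cos(jt)` with `α_j ≥ 0`, `Σ_j j² α_j < ∞`, and let `i ≥ 1` be the
smallest positive index with `α_i > 0`; set `-𝒰'(t) = α_i cos(it)`.  Then for `β ≥ 0` and
every `x ≠ ∂`, the second moment of `h_x` under the height measure for `β𝒰'` is at most the
one under the height measure for `β𝒰`. -/
theorem reduction_to_pure_cosine
    {V E : Type*} [Fintype V] [Fintype E]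
    (src tgt : E → V) (bd : V)
    (α : ℕ → ℝ) (hα : ∀ j, 0 ≤ α j)
    (hsum : Summable fun j : ℕ => (j : ℝ) ^ 2 * α j)
    (i : ℕ) (hi : 1 ≤ i) (hαi : 0 < α i)
    (hmin : ∀ j, 1 ≤ j → j < i → α j = 0)
    (β : ℝ) (hβ : 0 ≤ β)
    (x : V) (hx : x ≠ bd) :
    starHeightExp src tgt bd
        (dualWgt (fun t => -(α i * Real.cos (i * t))) β)
        (fun h => ((h x : ℤ) : ℝ) ^ 2)
      ≤ starHeightExp src tgt bd
          (dualWgt (fun t => -∑' j : ℕ, α j * Real.cos (j * t)) β)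
          (fun h => ((h x : ℤ) : ℝ) ^ 2) := by
  have hα1 : Summable α := by
    have hz : Summable fun j : ℕ => if j = 0 then α 0 else 0 :=
      (hasSum_ite_eq (0 : ℕ) (α 0)).summable
    refine (hsum.add hz).of_nonneg_of_le hα fun j => ?_
    rcases Nat.eq_zero_or_pos j with rfl | hj
    · simp
    · have h1 : (1 : ℝ) ≤ (j : ℝ) ^ 2 := by exact_mod_cast Nat.one_le_pow _ _ hj
      rw [if_neg hj.ne']
      nlinarith [hα j]
  -- the pure cosine is the potential with only the `i`-th coupling kept
  set J₁ : ℕ → ℝ := fun j => β * α j with hJ₁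
  set J₂ : ℕ → ℝ := fun j => if j = i then β * α i else 0 with hJ₂
  have h1 : ∀ j, 0 ≤ J₁ j := fun j => mul_nonneg hβ (hα j)
  have h2 : ∀ j, 0 ≤ J₂ j := fun j => by
    simp only [hJ₂]
    split_ifs
    exacts [h1 i, le_rfl]
  have h12 : ∀ j, |J₂ j| ≤ J₁ j := fun j => by
    rw [abs_of_nonneg (h2 j)]
    simp only [hJ₂]
    split_ifs with hj
    · rw [hj]
    · exact h1 j
  have hs1 : Summable fun j => |J₁ j| := (hα1.mul_left β).abs
  have hs2 : Summable fun j => |J₂ j| :=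
    hs1.of_nonneg_of_le (fun _ => abs_nonneg _) fun j => (h12 j).trans (le_abs_self _)
  have hm1 : Summable fun j : ℕ => (j : ℝ) ^ 2 * J₁ j :=
    (hsum.mul_left β).congr fun j => by simp only [hJ₁]; ring
  have hm2 : Summable fun j : ℕ => (j : ℝ) ^ 2 * J₂ j :=
    hm1.of_nonneg_of_le (fun j => mul_nonneg (sq_nonneg _) (h2 j)) fun j =>
      mul_le_mul_of_nonneg_left ((le_abs_self _).trans (h12 j)) (sq_nonneg _)
  have e1 : dualWgt (fun t => -∑' j : ℕ, α j * Real.cos (j * t)) β = fc J₁ :=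
    funext fun n => dualWgt_eq_fc (fun t => by
      rw [neg_mul_neg, ang, ← tsum_mul_left]
      exact tsum_congr fun j => (mul_assoc _ _ _).symm) n
  have e2 : dualWgt (fun t => -(α i * Real.cos (i * t))) β = fc J₂ :=
    funext fun n => dualWgt_eq_fc (fun t => by
      rw [neg_mul_neg, ang, tsum_eq_single i fun j hj => by simp [hJ₂, hj]]
      simp only [hJ₂, if_true, mul_assoc]) n
  rw [e1, e2]
  exact starHeightExp_mono src tgt bd x (fc_nonneg hs1 h1) (fc_nonneg hs2 h2) (fc_zero_pos hs1)
    (fc_zero_pos hs2) (fc_summable hs1 h1 hm1) (fc_summable hs2 h2 hm2) (limGram_sumDiff hs1 h12)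
end
end
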